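/- arXiv:2512.16283 — 11 statements merged into one kernel-verified Lean document; each statement's English description precedes it below -/
import Mathlib

section
/- For every real number σ > 2 there exists a constant c(σ) > 1 such that for all real numbers x, y with c(σ) ≤ y ≤ x one has ln^σ(x + y) − ln^σ(x) − (1/2)·ln^σ(y) ≤ 0. -/
/-- Lemma 5.1 of the paper. For every real `σ > 2` there is a constant
`c(σ) > 1` such that `ln^σ(x+y) - ln^σ(x) - (1/2)·ln^σ(y) ≤ 0` whenever `c(σ) ≤ y ≤ x`,
where `ln^σ t = (Real.log t) ^ σ` (real exponent). -/
theorem full_dim_KAM_stmt0 (σ : ℝ) (hσ : 2 < σ) :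
    ∃ c : ℝ, 1 < c ∧ ∀ x y : ℝ, c ≤ y → y ≤ x →
      Real.log (x + y) ^ σ - Real.log x ^ σ - (1 / 2) * Real.log y ^ σ ≤ 0 := by
  obtain ⟨s, rfl⟩ : ∃ s, σ = s + 1 := ⟨σ - 1, by ring⟩
  have hs : 0 < s := by linarith
  set C : ℝ := (s + 1) * (2 ^ s * (s ^ s * Real.exp 1)) with hC
  refine ⟨Real.exp (max 1 (2 * C)), by
    rw [Real.one_lt_exp_iff]; exact lt_of_lt_of_le one_pos (le_max_left _ _), ?_⟩
  intro x y hy hxy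
  have hy0 : 0 < y := lt_of_lt_of_le (Real.exp_pos _) hy
  have hx0 : 0 < x := by linarith
  have hl : max 1 (2 * C) ≤ Real.log y := (Real.le_log_iff_exp_le hy0).2 hy
  have hL : Real.log y ≤ Real.log x := Real.log_le_log hy0 hxy
  have hM : Real.log x ≤ Real.log (x + y) := Real.log_le_log hx0 (by linarith)
  have hl1 : 1 ≤ Real.log y := (le_max_left _ _).trans hl
  have hl2 : 2 * C ≤ Real.log y := (le_max_right _ _).trans hl
  have hr : Real.log (x + y) - Real.log x ≤ y / x := by
    rw [← Real.log_div (by positivity) (by positivity)]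
    have := Real.log_le_sub_one_of_pos (x := (x + y) / x) (by positivity)
    have e : (x + y) / x - 1 = y / x := by field_simp; ring
    linarith
  have hr1 : y / x ≤ 1 := (div_le_one hx0).2 hxy
  have hre : y / x = Real.exp (-(Real.log x - Real.log y)) := by
    rw [neg_sub, Real.exp_sub, Real.exp_log hx0, Real.exp_log hy0]
  rw [hre] at hr hr1
  generalize Real.log (x + y) = M at *
  generalize Real.log x = L at *
  generalize Real.log y = l at *
  obtain ⟨d, rfl⟩ : ∃ d, L = l + d := ⟨L - l, by ring⟩
  have hd : 0 ≤ d := by linarith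
  rw [show l + d - l = d by ring] at hr hr1
  have hM0 : 0 < M := by linarith
  have hL0 : 0 < l + d := by linarith
  have hl0 : 0 < l := by linarith
  -- Bernoulli
  have hB := one_add_mul_self_le_rpow_one_add (s := (l + d) / M - 1) (p := s + 1)
    (by have : 0 ≤ (l + d) / M := by positivity
        linarith) (by linarith)
  rw [show 1 + ((l + d) / M - 1) = (l + d) / M by ring,
    Real.div_rpow hL0.le hM0.le, le_div_iff₀ (by positivity)] at hB
  have hMp : M ^ (s + 1) = M ^ s * M := Real.rpow_add_one hM0.ne' s
  have hlp : l ^ (s + 1) = l ^ s * l := Real.rpow_add_one hl0.ne' s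
  have hB2 : M ^ (s + 1) - (l + d) ^ (s + 1) ≤ (s + 1) * (M ^ s * (M - (l + d))) := by
    have e : (1 + (s + 1) * ((l + d) / M - 1)) * M ^ (s + 1)
        = M ^ (s + 1) - (s + 1) * (M ^ s * (M - (l + d))) := by
      rw [hMp]; field_simp; ring
    linarith
  have hMs : M ^ s ≤ 2 ^ s * (l ^ s * (1 + d) ^ s) := by
    rw [← Real.mul_rpow hl0.le (by linarith), ← Real.mul_rpow (by norm_num) (by positivity)]
    exact Real.rpow_le_rpow hM0.le (by nlinarith) hs.le
  have hds : (1 + d) ^ s ≤ s ^ s * Real.exp (1 + d) := by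
    have h1 : 1 + d ≤ s * Real.exp ((1 + d) / s) := by
      have := Real.add_one_le_exp ((1 + d) / s)
      have h2 : (1 + d) / s ≤ Real.exp ((1 + d) / s) := by linarith
      rw [div_le_iff₀ hs] at h2
      linarith
    have h3 := Real.rpow_le_rpow (by linarith) h1 hs.le
    rwa [Real.mul_rpow hs.le (Real.exp_pos _).le, ← Real.exp_mul,
      div_mul_cancel₀ _ hs.ne'] at h3
  have hfin : M ^ s * (M - (l + d)) ≤ l ^ s * (2 ^ s * (s ^ s * Real.exp 1)) := by
    calc M ^ s * (M - (l + d))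
        ≤ (2 ^ s * (l ^ s * (s ^ s * Real.exp (1 + d)))) * Real.exp (-d) := by
          apply mul_le_mul _ hr (by linarith) (by positivity)
          exact hMs.trans (by gcongr)
      _ = l ^ s * (2 ^ s * (s ^ s * (Real.exp (1 + d) * Real.exp (-d)))) := by ring
      _ = _ := by rw [← Real.exp_add]; ring_nf
  have h4 : (s + 1) * (M ^ s * (M - (l + d))) ≤ l ^ s * C := by
    calc _ ≤ (s + 1) * (l ^ s * (2 ^ s * (s ^ s * Real.exp 1))) := by gcongr
      _ = _ := by rw [hC]; ring
  have h5 : l ^ s * (2 * C) ≤ l ^ s * l := by gcongr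
  rw [hlp]
  linarith
end

section
/- Let σ > 2, and let a, k, k' : ℤ → ℕ be finitely supported functions, not all zero. Let (n_i*)_{i≥1} be the decreasing rearrangement of the finite multiset in which each |n| (n ∈ ℤ) is repeated 2a_n + k_n + k'_n times. Then Σ_{n∈ℤ} (2a_n + k_n + k'_n)·ln^σ⌊n⌋ − 2·ln^σ⌊n₁*⌋ + ln^σ⌊m*(k,k')⌋ ≥ (1/2)·Σ_{i≥3} ln^σ⌊n_i*⌋, where Σ_{i≥3} denotes the sum over all entries of the multiset except its two largest. -/
/-- `ln^σ⌊n⌋` for an integer `n`, where `⌊n⌋ = max{c, |n|}`. -/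
noncomputable def lnZ (c σ : ℝ) (n : ℤ) : ℝ := Real.log (max c |(n : ℝ)|) ^ σ

/-- `ln^σ⌊m⌋` for a natural number `m`, where `⌊m⌋ = max{c, m}`. -/
noncomputable def lnN (c σ : ℝ) (m : ℕ) : ℝ := Real.log (max c (m : ℝ)) ^ σ

/-- The finite multiset in which each `|n|` (`n ∈ ℤ`) is repeated `2aₙ + kₙ + k'ₙ` times. -/
def reps (a k k' : ℤ →₀ ℕ) : Multiset ℕ :=
  (a.support ∪ k.support ∪ k'.support).val.bind
    (fun n => Multiset.replicate (2 * a n + k n + k' n) n.natAbs)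

/-- The decreasing rearrangement `(n₁*, n₂*, …)` of a finite multiset of naturals. -/
def descList (M : Multiset ℕ) : List ℕ := (M.sort (· ≤ ·)).reverse

/-- The momentum `m(k,k') = ∑ₙ (kₙ - k'ₙ)·n` of finitely supported `k, k' : ℤ → ℕ`. -/
def momentum (k k' : ℤ →₀ ℕ) : ℤ :=
  ∑ n ∈ k.support ∪ k'.support, ((k n : ℤ) - (k' n : ℤ)) * n

theorem lnN_nonneg' (c σ : ℝ) (hc : Real.exp 1 ≤ c) (m : ℕ) : 0 ≤ lnN c σ m := by
  have h1 : (1 : ℝ) ≤ c := le_trans (by have := Real.add_one_le_exp (1 : ℝ); linarith) hc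
  exact Real.rpow_nonneg (Real.log_nonneg (le_trans h1 (le_max_left _ _))) _

theorem lnN_mono' (c σ : ℝ) (hσ : 2 < σ) (hc : Real.exp 1 ≤ c) {m n : ℕ} (h : m ≤ n) :
    lnN c σ m ≤ lnN c σ n := by
  have h1 : (1 : ℝ) ≤ c := le_trans (by have := Real.add_one_le_exp (1 : ℝ); linarith) hc
  have h2 : (m : ℝ) ≤ n := by exact_mod_cast h
  have h3 : (1 : ℝ) ≤ max c (m : ℝ) := le_trans h1 (le_max_left _ _)
  unfold lnN
  refine Real.rpow_le_rpow (Real.log_nonneg h3) (Real.log_le_log (by linarith) ?_) (by linarith)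
  exact max_le_max le_rfl h2

theorem lnN_add' (c σ : ℝ) (hσ : 2 < σ) (hc : Real.exp 1 ≤ c)
    (hsub : ∀ x y : ℝ, c ≤ y → y ≤ x →
      Real.log (x + y) ^ σ ≤ Real.log x ^ σ + (1 / 2) * Real.log y ^ σ)
    {x y : ℕ} (h : y ≤ x) : lnN c σ (x + y) ≤ lnN c σ x + (1 / 2) * lnN c σ y := by
  have h1 : (1 : ℝ) ≤ c := le_trans (by have := Real.add_one_le_exp (1 : ℝ); linarith) hc
  have h2 : (y : ℝ) ≤ x := by exact_mod_cast h
  have h3 := hsub (max c (x : ℝ)) (max c (y : ℝ)) (le_max_left _ _) (max_le_max le_rfl h2)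
  refine le_trans ?_ h3
  unfold lnN
  have h4 : (1 : ℝ) ≤ max c ((x + y : ℕ) : ℝ) := le_trans h1 (le_max_left _ _)
  refine Real.rpow_le_rpow (Real.log_nonneg h4) (Real.log_le_log (by linarith) ?_) (by linarith)
  have := le_max_left c (x : ℝ)
  have := le_max_left c (y : ℝ)
  have := le_max_right c (x : ℝ)
  have := le_max_right c (y : ℝ)
  push_cast
  exact max_le (by linarith) (by linarith)

theorem lnN_list' (c σ : ℝ) (hσ : 2 < σ) (hc : Real.exp 1 ≤ c)
    (hsub : ∀ x y : ℝ, c ≤ y → y ≤ x →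
      Real.log (x + y) ^ σ ≤ Real.log x ^ σ + (1 / 2) * Real.log y ^ σ)
    (l : List ℕ) : ∀ X : ℕ, (∀ y ∈ l, y ≤ X) →
      lnN c σ (X + l.sum) ≤ lnN c σ X + (1 / 2) * (l.map (lnN c σ)).sum := by
  induction l with
  | nil => intro X _; simp
  | cons y l ih =>
    intro X hX
    have h1 := ih (X + y) (fun z hz => le_trans (hX z (by simp [hz])) (Nat.le_add_right _ _))
    have h2 := lnN_add' c σ hσ hc hsub (hX y (by simp))
    simp only [List.sum_cons, List.map_cons]
    rw [← add_assoc]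
    linarith

theorem descList_coe' (M : Multiset ℕ) : (descList M : Multiset ℕ) = M := by
  unfold descList
  rw [Multiset.coe_reverse, Multiset.sort_eq]

theorem reps_sum' {R : Type*} [CommSemiring R] (a k k' : ℤ →₀ ℕ) (g : ℕ → R) :
    ((descList (reps a k k')).map g).sum =
      ∑ n ∈ a.support ∪ k.support ∪ k'.support, ((2 * a n + k n + k' n : ℕ) : R) * g n.natAbs := by
  rw [← Multiset.sum_coe, ← Multiset.map_coe, descList_coe']
  unfold reps
  rw [Multiset.map_bind, Multiset.sum_bind]
  simp only [Multiset.map_replicate, Multiset.sum_replicate, nsmul_eq_mul]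
  rfl

theorem two_mul_le' (a k k' : ℤ →₀ ℕ) (N : ℤ) (hN : N ∈ a.support ∪ k.support ∪ k'.support) :
    2 * (N.natAbs : ℤ) ≤ (momentum k k').natAbs +
      ∑ n ∈ a.support ∪ k.support ∪ k'.support,
        ((2 * a n + k n + k' n : ℕ) : ℤ) * (n.natAbs : ℤ) := by
  have hm : momentum k k' = ∑ n ∈ a.support ∪ k.support ∪ k'.support,
      ((k n : ℤ) - (k' n : ℤ)) * n := by
    unfold momentum
    apply Finset.sum_subset
    · intro x hx
      simp only [Finset.mem_union] at hx ⊢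
      tauto
    · intro x _ hx
      simp only [Finset.mem_union, Finsupp.mem_support_iff, not_or, not_not] at hx
      simp [hx.1, hx.2]
  rw [hm]
  have hw : 1 ≤ 2 * a N + k N + k' N := by
    simp only [Finset.mem_union, Finsupp.mem_support_iff] at hN
    omega
  rw [← Finset.add_sum_erase _ _ hN, ← Finset.add_sum_erase _ _ hN]
  set E := (a.support ∪ k.support ∪ k'.support).erase N
  have h1 : |∑ n ∈ E, ((k n : ℤ) - (k' n : ℤ)) * n| ≤
      ∑ n ∈ E, ((2 * a n + k n + k' n : ℕ) : ℤ) * (n.natAbs : ℤ) := by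
    refine (Finset.abs_sum_le_sum_abs _ _).trans (Finset.sum_le_sum fun n _ => ?_)
    rw [abs_mul, Int.natCast_natAbs]
    refine mul_le_mul_of_nonneg_right ?_ (abs_nonneg _)
    rw [abs_le]; push_cast; constructor <;> omega
  have h2 := abs_sub_abs_le_abs_add (((k N : ℤ) - (k' N : ℤ)) * N)
    (∑ n ∈ E, ((k n : ℤ) - (k' n : ℤ)) * n)
  rw [abs_mul] at h2
  have h3 : (2 : ℤ) ≤ |(k N : ℤ) - (k' N : ℤ)| + ((2 * a N + k N + k' N : ℕ) : ℤ) := by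
    push_cast
    rcases abs_cases ((k N : ℤ) - (k' N : ℤ)) with h | h <;> omega
  have h4 := mul_le_mul_of_nonneg_right h3 (abs_nonneg N)
  rw [Int.natCast_natAbs, Int.natCast_natAbs]
  linarith

/-- Lemma 2.1 of the paper. With `(nᵢ*)` the decreasing rearrangement of the
multiset in which each `|n|` is repeated `2aₙ + kₙ + k'ₙ` times,
`∑ₙ (2aₙ + kₙ + k'ₙ)·ln^σ⌊n⌋ − 2·ln^σ⌊n₁*⌋ + ln^σ⌊m*(k,k')⌋ ≥ (1/2)·∑_{i≥3} ln^σ⌊nᵢ*⌋`. -/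
theorem full_dim_KAM_stmt2 (σ : ℝ) (hσ : 2 < σ) (c : ℝ) (hc : Real.exp 1 ≤ c)
    (hsub : ∀ x y : ℝ, c ≤ y → y ≤ x →
      Real.log (x + y) ^ σ ≤ Real.log x ^ σ + (1 / 2) * Real.log y ^ σ)
    (a k k' : ℤ →₀ ℕ) (hne : ¬(a = 0 ∧ k = 0 ∧ k' = 0)) :
    (∑ n ∈ a.support ∪ k.support ∪ k'.support,
        ((2 * a n + k n + k' n : ℕ) : ℝ) * lnZ c σ n)
      - 2 * lnN c σ (descList (reps a k k')).headI
      + lnN c σ (momentum k k').natAbs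
    ≥ (1 / 2) * (((descList (reps a k k')).drop 2).map (lnN c σ)).sum := by
  have hS : (∑ n ∈ a.support ∪ k.support ∪ k'.support,
        ((2 * a n + k n + k' n : ℕ) : ℝ) * lnZ c σ n) =
      ((descList (reps a k k')).map (lnN c σ)).sum := by
    rw [reps_sum']
    refine Finset.sum_congr rfl fun n _ => ?_
    unfold lnZ lnN
    rw [Nat.cast_natAbs, Int.cast_abs]
  rw [hS]
  have hT := reps_sum' (R := ℤ) a k k' (fun n => (n : ℤ))
  have hmem : ∀ x, x ∈ descList (reps a k k') ↔ x ∈ reps a k k' := fun x => by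
    rw [← Multiset.mem_coe, descList_coe']
  have hsort : (descList (reps a k k')).Pairwise (fun x y => y ≤ x) := by
    unfold descList
    rw [List.pairwise_reverse]
    exact Multiset.pairwise_sort _ _
  have key : ∀ x ∈ descList (reps a k k'), 2 * (x : ℤ) ≤ (momentum k k').natAbs +
      ((descList (reps a k k')).map (fun n : ℕ => (n : ℤ))).sum := by
    intro x hx
    rw [hmem] at hx
    unfold reps at hx
    rw [Multiset.mem_bind] at hx
    obtain ⟨N, hN, hx⟩ := hx
    rw [Multiset.eq_of_mem_replicate hx, hT]
    exact two_mul_le' a k k' N hN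
  have hnil : descList (reps a k k') ≠ [] := by
    intro h
    apply hne
    have h0 := reps_sum' (R := ℕ) a k k' (fun _ => 1)
    rw [h] at h0
    simp only [List.map_nil, List.sum_nil, mul_one, Nat.cast_id] at h0
    have h1 := Finset.sum_eq_zero_iff.1 h0.symm
    have h2 : ∀ n, a n = 0 ∧ k n = 0 ∧ k' n = 0 := by
      intro n
      by_cases hn : n ∈ a.support ∪ k.support ∪ k'.support
      · have := h1 n hn
        omega
      · simp only [Finset.mem_union, Finsupp.mem_support_iff, not_or, not_not] at hn
        tauto
    exact ⟨Finsupp.ext fun n => (h2 n).1, Finsupp.ext fun n => (h2 n).2.1,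
      Finsupp.ext fun n => (h2 n).2.2⟩
  generalize descList (reps a k k') = L at *
  generalize (momentum k k').natAbs = m at *
  match L, hnil with
  | [x], _ =>
    have h1 := key x (by simp)
    simp only [List.map_cons, List.map_nil, List.sum_cons, List.sum_nil] at h1
    have h2 := lnN_mono' c σ hσ hc (show x ≤ m by omega)
    simp
    linarith
  | x :: y :: l, _ =>
    have h1 := key x (by simp)
    have hcast : ((l.map (fun n : ℕ => (n : ℤ))).sum) = ((l.sum : ℕ) : ℤ) := by
      induction l with
      | nil => simp
      | cons z l ih => simp
    simp only [List.map_cons, List.sum_cons, hcast] at h1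
    have h2 := lnN_mono' c σ hσ hc (show x ≤ m + y + l.sum by omega)
    have hy : ∀ z ∈ l, z ≤ y := (List.pairwise_cons.1 (List.pairwise_cons.1 hsort).2).1
    have h3 := lnN_list' c σ hσ hc hsub l (m + y)
      (fun z hz => (hy z hz).trans (Nat.le_add_left _ _))
    have h4 : lnN c σ (m + y) ≤ lnN c σ m + lnN c σ y := by
      have p1 := lnN_nonneg' c σ hc m
      have p2 := lnN_nonneg' c σ hc y
      rcases le_total y m with h | h
      · have := lnN_add' c σ hσ hc hsub h
        linarith
      · have := lnN_add' c σ hσ hc hsub h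
        rw [add_comm m y]
        linarith
    simp only [List.map_cons, List.sum_cons, List.headI, List.drop]
    linarith
end

section
/- Let σ > 2. Let k, k' : ℤ → ℕ be finitely supported, let Ṽ : ℤ → ℝ satisfy |Ṽ_n| ≤ 2 for all n, and assume |Σ_{n∈ℤ} (k_n − k'_n)(n² + Ṽ_n)| ≤ 1. Let (n_i)_{i≥1} be an enumeration of the finite multiset in which each n ∈ ℤ is repeated k_n + k'_n times, arranged so that |n₁| ≥ |n₂| ≥ |n₃| ≥ ⋯. Then Σ_{n∈ℤ} |k_n − k'_n|·ln^σ⌊n⌋ ≤ 3·4^σ·( Σ_{i≥3} ln^σ⌊n_i⌋ + ln^σ⌊m*(k,k')⌋ ), where Σ_{i≥3} denotes the sum over all entries of the multiset except two entries of largest absolute value. -/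
/-- The finite multiset in which each `|n|` (`n ∈ ℤ`) is repeated `kₙ + k'ₙ` times;
its decreasing rearrangement is the sequence `(|n₁|, |n₂|, …)` with `|n₁| ≥ |n₂| ≥ ⋯`. -/
def reps2 (k k' : ℤ →₀ ℕ) : Multiset ℕ :=
  (k.support ∪ k'.support).val.bind
    (fun n => Multiset.replicate (k n + k' n) n.natAbs)

/-- Signed enumeration multiset. -/
def sgnMS (k k' : ℤ →₀ ℕ) : Multiset (ℤ × ℤ) :=
  (k.support ∪ k'.support).val.bind
    (fun n => Multiset.replicate (k n) (n, (1:ℤ)) + Multiset.replicate (k' n) (n, (-1:ℤ)))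

lemma sgnMS_map (k k' : ℤ →₀ ℕ) :
    (sgnMS k k').map (fun p => p.1.natAbs) = reps2 k k' := by
  unfold sgnMS reps2
  rw [Multiset.map_bind]
  congr 1
  funext n
  simp [Multiset.map_replicate, Multiset.replicate_add]

lemma sgnMS_sum {R : Type*} [CommRing R] (k k' : ℤ →₀ ℕ) (g : ℤ × ℤ → R) :
    ((sgnMS k k').map g).sum
      = ∑ n ∈ k.support ∪ k'.support, ((k n : R) * g (n, 1) + (k' n : R) * g (n, -1)) := by
  unfold sgnMS
  rw [Multiset.map_bind, Multiset.sum_bind]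
  simp [Multiset.map_replicate, Finset.sum]

lemma sgnMS_mem (k k' : ℤ →₀ ℕ) (p : ℤ × ℤ) (hp : p ∈ sgnMS k k') :
    (p.2 = 1 ∧ 1 ≤ k p.1) ∨ (p.2 = -1 ∧ 1 ≤ k' p.1) := by
  unfold sgnMS at hp
  simp only [Multiset.mem_bind, Multiset.mem_add, Multiset.mem_replicate] at hp
  obtain ⟨n, -, ⟨h, rfl⟩ | ⟨h, rfl⟩⟩ := hp
  · left; exact ⟨rfl, Nat.one_le_iff_ne_zero.2 h⟩
  · right; exact ⟨rfl, Nat.one_le_iff_ne_zero.2 h⟩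

lemma lift_list {α β : Type*} (g : α → β) : ∀ (D : List β) (P : Multiset α),
    P.map g = (D : Multiset β) → ∃ l : List α, (l : Multiset α) = P ∧ l.map g = D
  | [], P, h => by
      refine ⟨[], ?_, rfl⟩
      have : P.map g = 0 := h
      rw [Multiset.map_eq_zero] at this
      simp [this]
  | d :: D, P, h => by
      classical
      rw [← Multiset.cons_coe, ← Multiset.map_eq_cons] at h
      obtain ⟨a, ha, hga, h⟩ := h
      obtain ⟨l, hl, hl2⟩ := lift_list g D _ h
      refine ⟨a :: l, ?_, by simp [hga, hl2]⟩
      rw [← Multiset.cons_coe, hl, Multiset.cons_erase ha]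

lemma abs_list_sum_le {α : Type*} (g h : α → ℝ) (t : List α) (H : ∀ p ∈ t, |g p| ≤ h p) :
    |(t.map g).sum| ≤ (t.map h).sum := by
  induction t with
  | nil => simp
  | cons a t ih =>
    simp only [List.map_cons, List.sum_cons]
    have h1 := ih (fun p hp => H p (List.mem_cons_of_mem _ hp))
    have h2 := H a List.mem_cons_self
    exact (abs_add_le _ _).trans (add_le_add h2 h1)

lemma lnN_natAbs (c σ : ℝ) (n : ℤ) : lnN c σ n.natAbs = lnZ c σ n := by
  unfold lnN lnZ
  rw [Nat.cast_natAbs, Int.cast_abs]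

lemma core_case (n₁ n₂ e₁ e₂ m : ℤ) (v₁ v₂ R M T B : ℝ)
    (h₁ : e₁ = 1 ∨ e₁ = -1) (h₂ : e₂ = 1 ∨ e₂ = -1) (hv₁ : |v₁| ≤ 2) (hv₂ : |v₂| ≤ 2)
    (hR : |R| ≤ T) (hM : |M| ≤ T) (hB : 5 ≤ B) (hm : |(m : ℝ)| ≤ B)
    (hs : |(e₁ : ℝ) * ((n₁ : ℝ) ^ 2 + v₁) + ((e₂ : ℝ) * ((n₂ : ℝ) ^ 2 + v₂) + R)| ≤ 1)
    (hmom : (m : ℝ) = (e₁ : ℝ) * n₁ + ((e₂ : ℝ) * n₂ + M))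
    (hne : ¬ (n₁ = n₂ ∧ e₁ = -e₂)) :
    |(n₁ : ℝ)| ≤ T + B ∧ |(n₂ : ℝ)| ≤ T + B := by
  have hsq : ∀ n : ℤ, |(n : ℝ)| ≤ (n : ℝ) ^ 2 := by
    intro n
    have : |n| ≤ n ^ 2 := by
      rw [← sq_abs]
      rcases eq_or_lt_of_le (abs_nonneg n) with h | h
      · rw [← h]; norm_num
      · nlinarith
    exact_mod_cast this
  have q₁ := hsq n₁
  have q₂ := hsq n₂
  have a₁ := abs_nonneg (n₁ : ℝ)
  have a₂ := abs_nonneg (n₂ : ℝ)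
  rw [abs_le] at hv₁ hv₂ hR hM hm hs
  by_cases hab : |n₁| = |n₂| ∧ e₁ = - e₂
  · obtain ⟨hab, he⟩ := hab
    rcases abs_eq_abs.1 hab with h | h
    · exact absurd ⟨h, he⟩ hne
    · have e1 : (n₁ : ℝ) = - n₂ := by exact_mod_cast h
      rw [e1] at hmom ⊢
      rw [abs_neg, and_self, abs_le]
      rcases h₂ with h₂ | h₂ <;> subst h₂ <;> subst he <;> push_cast at hmom <;>
        constructor <;> linarith
  · by_cases he : e₁ = - e₂
    · have hab' : |n₁| ≠ |n₂| := fun h => hab ⟨h, he⟩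
      have key : |(n₁ : ℝ)| + |(n₂ : ℝ)| ≤ |(n₁ : ℝ) ^ 2 - (n₂ : ℝ) ^ 2| := by
        have : |n₁| + |n₂| ≤ |n₁ ^ 2 - n₂ ^ 2| := by
          rw [← sq_abs n₁, ← sq_abs n₂, sq_sub_sq, abs_mul,
            abs_of_nonneg (add_nonneg (abs_nonneg n₁) (abs_nonneg n₂))]
          have : 1 ≤ |(|n₁| - |n₂|)| := Int.one_le_abs (sub_ne_zero.2 hab')
          nlinarith [abs_nonneg n₁, abs_nonneg n₂]
        exact_mod_cast this
      have : |(n₁ : ℝ) ^ 2 - (n₂ : ℝ) ^ 2| ≤ T + B := by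
        rw [abs_le]
        rcases h₂ with h₂ | h₂ <;> subst h₂ <;> subst he <;> push_cast at hs <;>
          constructor <;> linarith
      constructor <;> linarith
    · have he' : e₁ = e₂ := by omega
      subst he'
      have : (n₁ : ℝ) ^ 2 + (n₂ : ℝ) ^ 2 ≤ T + B := by
        rcases h₁ with h₁ | h₁ <;> subst h₁ <;> push_cast at hs <;> linarith
      constructor <;> linarith

lemma log_sum_le (σ : ℝ) (hσ : 2 < σ) (c : ℝ) (hc : Real.exp 1 ≤ c)
    (hsub : ∀ x y : ℝ, c ≤ y → y ≤ x →
      Real.log (x + y) ^ σ ≤ Real.log x ^ σ + (1 / 2) * Real.log y ^ σ)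
    (m : ℤ) (t : List (ℤ × ℤ)) :
    c ≤ (t.map (fun p => (max c |(p.1 : ℝ)|) ^ 3)).sum + (max c |(m : ℝ)|) ^ 3 ∧
    Real.log ((t.map (fun p => (max c |(p.1 : ℝ)|) ^ 3)).sum + (max c |(m : ℝ)|) ^ 3) ^ σ
      ≤ 3 ^ σ * ((t.map (fun p => lnZ c σ p.1)).sum + lnZ c σ m) := by
  have hc2 : (2:ℝ) ≤ c := by
    have := Real.add_one_le_exp (1:ℝ); linarith
  have cube : ∀ n : ℤ, c ≤ (max c |(n : ℝ)|) ^ 3 := by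
    intro n
    have h := le_max_left c |(n : ℝ)|
    set a := max c |(n : ℝ)|
    have : a ≤ a ^ 3 := le_self_pow₀ (by linarith) (by norm_num)
    linarith
  have lcube : ∀ n : ℤ, Real.log ((max c |(n : ℝ)|) ^ 3) ^ σ = 3 ^ σ * lnZ c σ n := by
    intro n
    have h := le_max_left c |(n : ℝ)|
    unfold lnZ
    rw [Real.log_pow, Real.mul_rpow (by norm_num) (Real.log_nonneg (by linarith))]
    norm_num
  have sub : ∀ x y : ℝ, c ≤ x → c ≤ y →
      Real.log (x + y) ^ σ ≤ Real.log x ^ σ + Real.log y ^ σ := by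
    intro x y hx hy
    have px : 0 ≤ Real.log x ^ σ := Real.rpow_nonneg (Real.log_nonneg (by linarith)) _
    have py : 0 ≤ Real.log y ^ σ := Real.rpow_nonneg (Real.log_nonneg (by linarith)) _
    rcases le_total y x with h | h
    · linarith [hsub x y hy h]
    · rw [add_comm x y]; linarith [hsub y x hx h]
  induction t with
  | nil =>
    simp only [List.map_nil, List.sum_nil, zero_add]
    exact ⟨cube m, (lcube m).le⟩
  | cons p t ih =>
    obtain ⟨i1, i2⟩ := ih
    simp only [List.map_cons, List.sum_cons]
    rw [add_assoc, add_assoc]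
    refine ⟨by linarith [cube p.1], ?_⟩
    have := sub _ _ (cube p.1) i1
    rw [lcube] at this
    linarith

/-- Lemma 5.2 of the paper, the small-divisor counting lemma.
If `|Ṽₙ| ≤ 2` for all `n` and `|∑ₙ (kₙ - k'ₙ)(n² + Ṽₙ)| ≤ 1`, then
`∑ₙ |kₙ - k'ₙ|·ln^σ⌊n⌋ ≤ 3·4^σ·( ∑_{i≥3} ln^σ⌊nᵢ⌋ + ln^σ⌊m*(k,k')⌋ )`, where `(nᵢ)` enumerates
the multiset with each `n` repeated `kₙ + k'ₙ` times, ordered by decreasing `|nᵢ|`, and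
`∑_{i≥3}` omits two entries of largest absolute value. -/
theorem full_dim_KAM_stmt3 (σ : ℝ) (hσ : 2 < σ) (c : ℝ) (hc : Real.exp 1 ≤ c)
    (hsub : ∀ x y : ℝ, c ≤ y → y ≤ x →
      Real.log (x + y) ^ σ ≤ Real.log x ^ σ + (1 / 2) * Real.log y ^ σ)
    (k k' : ℤ →₀ ℕ) (V : ℤ → ℝ) (hV : ∀ n, |V n| ≤ 2)
    (hsmall : |∑ n ∈ k.support ∪ k'.support,
        ((k n : ℝ) - (k' n : ℝ)) * ((n : ℝ) ^ 2 + V n)| ≤ 1) :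
    ∑ n ∈ k.support ∪ k'.support, |(k n : ℝ) - (k' n : ℝ)| * lnZ c σ n
      ≤ 3 * (4 : ℝ) ^ σ *
        ((((descList (reps2 k k')).drop 2).map (lnN c σ)).sum
          + lnN c σ (momentum k k').natAbs) := by
  classical
  have hc2 : (2.7:ℝ) ≤ c := by
    have := Real.exp_one_gt_d9; norm_num at this ⊢; linarith
  obtain ⟨l, hlP, hlD⟩ := lift_list (fun p : ℤ × ℤ => p.1.natAbs) (descList (reps2 k k'))
    (sgnMS k k') (by
      rw [sgnMS_map]; unfold descList
      rw [Multiset.coe_reverse, Multiset.sort_eq])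
  have hsum : ∀ g : ℤ × ℤ → ℝ, (l.map g).sum
      = ∑ n ∈ k.support ∪ k'.support, ((k n : ℝ) * g (n, 1) + (k' n : ℝ) * g (n, -1)) := by
    intro g
    rw [← sgnMS_sum, ← hlP, Multiset.map_coe, Multiset.sum_coe]
  have hmem : ∀ p ∈ l, (p.2 = 1 ∧ 1 ≤ k p.1) ∨ (p.2 = -1 ∧ 1 ≤ k' p.1) := by
    intro p hp
    apply sgnMS_mem
    rw [← hlP]; exact hp
  have hpm : ∀ p ∈ l, p.2 = 1 ∨ p.2 = -1 := fun p hp => (hmem p hp).imp And.left And.left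
  set m := momentum k k' with hmdef
  have hmom : (m : ℝ) = (l.map (fun p => (p.2 : ℝ) * p.1)).sum := by
    rw [hsum, hmdef, momentum]
    push_cast
    exact Finset.sum_congr rfl fun n _ => by ring
  have hsm : |(l.map (fun p => (p.2 : ℝ) * ((p.1 : ℝ) ^ 2 + V p.1))).sum| ≤ 1 := by
    rw [hsum]
    convert hsmall using 2
    exact Finset.sum_congr rfl fun n _ => by push_cast; ring
  have hf0 : ∀ n : ℤ, 0 ≤ lnZ c σ n := fun n =>
    Real.rpow_nonneg (Real.log_nonneg (by linarith [le_max_left c |(n : ℝ)|])) _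
  have hkk : ∀ n, |(k n : ℝ) - (k' n : ℝ)| ≤ k n + k' n := fun n => by
    have h1 : (0:ℝ) ≤ k n := Nat.cast_nonneg _
    have h2 : (0:ℝ) ≤ k' n := Nat.cast_nonneg _
    rw [abs_le]; constructor <;> linarith
  have hL : ∑ n ∈ k.support ∪ k'.support, |(k n : ℝ) - (k' n : ℝ)| * lnZ c σ n
      ≤ (l.map (fun p => lnZ c σ p.1)).sum := by
    rw [hsum]
    refine Finset.sum_le_sum fun n _ => ?_
    simp only
    rw [← add_mul]
    exact mul_le_mul_of_nonneg_right (hkk n) (hf0 n)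
  have hdrop : ((descList (reps2 k k')).drop 2).map (lnN c σ)
      = (l.drop 2).map (fun p => lnZ c σ p.1) := by
    rw [← hlD, ← List.map_drop, List.map_map]
    congr 1
    funext p
    exact lnN_natAbs c σ p.1
  rw [hdrop, lnN_natAbs]
  have h34 : (3:ℝ) ^ σ ≤ 4 ^ σ :=
    Real.rpow_le_rpow (by norm_num) (by norm_num) (by linarith)
  have h31 : (1:ℝ) ≤ 3 ^ σ := Real.one_le_rpow (by norm_num) (by linarith)
  have hS0 : ∀ t : List (ℤ × ℤ), 0 ≤ (t.map (fun p => lnZ c σ p.1)).sum + lnZ c σ m := by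
    intro t
    refine add_nonneg (List.sum_nonneg ?_) (hf0 m)
    intro x hx
    obtain ⟨p, -, rfl⟩ := List.mem_map.1 hx
    exact hf0 _
  have hB5 : 5 ≤ (max c |(m : ℝ)|) ^ 3 ∧ |(m : ℝ)| ≤ (max c |(m : ℝ)|) ^ 3 := by
    have h1 := le_max_left c |(m : ℝ)|
    have h2 := le_max_right c |(m : ℝ)|
    set a := max c |(m : ℝ)|
    have h3 : (2.7:ℝ) ^ 3 ≤ a ^ 3 := pow_le_pow_left₀ (by norm_num) (by linarith) 3
    have : a ≤ a ^ 3 := le_self_pow₀ (by linarith) (by norm_num)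
    constructor
    · norm_num at h3; linarith
    · linarith
  have hcube : ∀ n : ℤ, (n : ℝ) ^ 2 + 2 ≤ (max c |(n : ℝ)|) ^ 3 ∧
      |(n : ℝ)| ≤ (max c |(n : ℝ)|) ^ 3 := by
    intro n
    have h1 := le_max_left c |(n : ℝ)|
    have h2 := le_max_right c |(n : ℝ)|
    rw [← sq_abs (n : ℝ)]
    have h0 := abs_nonneg (n : ℝ)
    set a := max c |(n : ℝ)|
    have : a ≤ a ^ 3 := le_self_pow₀ (by linarith) (by norm_num)
    have h3 : |(n : ℝ)| ^ 2 ≤ a ^ 2 := pow_le_pow_left₀ h0 h2 2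
    have h4 : (2.7:ℝ) ^ 2 ≤ a ^ 2 := pow_le_pow_left₀ (by norm_num) (by linarith) 2
    have h5 : 2.7 * a ^ 2 ≤ a ^ 3 := by
      rw [pow_succ a 2]; nlinarith
    norm_num at h4 h5
    constructor <;> linarith
  have hbd : ∀ (n : ℤ) (t : List (ℤ × ℤ)),
      |(n : ℝ)| ≤ (t.map (fun p => (max c |(p.1 : ℝ)|) ^ 3)).sum + (max c |(m : ℝ)|) ^ 3 →
      lnZ c σ n ≤ 3 ^ σ * ((t.map (fun p => lnZ c σ p.1)).sum + lnZ c σ m) := by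
    intro n t hn
    obtain ⟨i1, i2⟩ := log_sum_le σ hσ c hc hsub m t
    refine le_trans ?_ i2
    unfold lnZ
    have h1 := le_max_left c |(n : ℝ)|
    exact Real.rpow_le_rpow (Real.log_nonneg (by linarith))
      (Real.log_le_log (by linarith) (max_le i1 hn)) (by linarith)
  have hfin : ∀ (X : ℝ) (t : List (ℤ × ℤ)),
      X ≤ 2 * (3 ^ σ * ((t.map (fun p => lnZ c σ p.1)).sum + lnZ c σ m))
        + (t.map (fun p => lnZ c σ p.1)).sum →
      X ≤ 3 * (4 : ℝ) ^ σ * ((t.map (fun p => lnZ c σ p.1)).sum + lnZ c σ m) := by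
    intro X t hX
    have h0 := hS0 t
    have h1 := hf0 m
    set S := (t.map (fun p => lnZ c σ p.1)).sum + lnZ c σ m with hS
    have : 3 ^ σ * S ≤ 4 ^ σ * S := mul_le_mul_of_nonneg_right h34 h0
    have : 1 * S ≤ 3 ^ σ * S := mul_le_mul_of_nonneg_right h31 h0
    linarith
  have hTR : ∀ t : List (ℤ × ℤ), (∀ p ∈ t, p.2 = 1 ∨ p.2 = -1) →
      |(t.map (fun p => (p.2 : ℝ) * ((p.1 : ℝ) ^ 2 + V p.1))).sum|
        ≤ (t.map (fun p => (max c |(p.1 : ℝ)|) ^ 3)).sum ∧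
      |(t.map (fun p => (p.2 : ℝ) * p.1)).sum|
        ≤ (t.map (fun p => (max c |(p.1 : ℝ)|) ^ 3)).sum := by
    intro t ht
    have he : ∀ p ∈ t, |(p.2 : ℝ)| = 1 := by
      intro p hp
      rcases ht p hp with h | h <;> rw [h] <;> norm_num
    constructor
    · apply abs_list_sum_le
      intro p hp
      rw [abs_mul, he p hp, one_mul]
      have := (abs_le.1 (hV p.1))
      have h2 := (hcube p.1).1
      rw [abs_le]; constructor <;> nlinarith [sq_nonneg (p.1 : ℝ)]
    · apply abs_list_sum_le
      intro p hp
      rw [abs_mul, he p hp, one_mul]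
      exact (hcube p.1).2
  match l, hlP, hlD, hsum, hmem, hpm, hmom, hsm, hL with
  | [], _, _, _, _, _, _, _, hL =>
    apply hfin
    have := hS0 []
    simp at hL this ⊢
    have : 0 ≤ 2 * (3 ^ σ * lnZ c σ m) := by positivity
    linarith
  | [p], _, _, _, _, hpm, hmom, hsm, hL =>
    apply hfin
    have h1 := hpm p (by simp)
    have hs : |(p.2 : ℝ) * ((p.1 : ℝ) ^ 2 + V p.1)| ≤ 1 := by simpa using hsm
    have hm' : (m : ℝ) = (p.2 : ℝ) * p.1 := by simpa using hmom
    have hn : lnZ c σ p.1 ≤ 3 ^ σ * lnZ c σ m := by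
      have := hbd p.1 [] (by
        have : |(p.1 : ℝ)| = |(m : ℝ)| := by
          rw [hm', abs_mul]
          rcases h1 with h | h <;> rw [h] <;> norm_num
        rw [this]; simpa using hB5.2)
      simpa using this
    have := hf0 p.1
    simp at hL ⊢
    linarith
  | p :: q :: t, _, _, hsum, hmem, hpm, hmom, hsm, hL =>
    simp only [List.drop_succ_cons, List.drop_zero]
    simp only [List.map_cons, List.sum_cons] at hmom hsm hL hsum
    by_cases hcan : p.1 = q.1 ∧ p.2 = -q.2
    · obtain ⟨h1, h2⟩ := hcan
      have hk : 1 ≤ k p.1 ∧ 1 ≤ k' p.1 := by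
        have a := hmem p (by simp)
        have b := hmem q (by simp)
        rw [← h1] at b
        rcases a with ⟨a, a'⟩ | ⟨a, a'⟩ <;> rcases b with ⟨b, b'⟩ | ⟨b, b'⟩
        · omega
        · exact ⟨a', b'⟩
        · exact ⟨b', a'⟩
        · omega
      have hin : p.1 ∈ k.support ∪ k'.support := by
        simp only [Finset.mem_union, Finsupp.mem_support_iff]; omega
      have hle : ∑ n ∈ k.support ∪ k'.support, |(k n : ℝ) - (k' n : ℝ)| * lnZ c σ n
          ≤ ∑ n ∈ k.support ∪ k'.support,
            (((k n : ℝ) * lnZ c σ n + (k' n : ℝ) * lnZ c σ n)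
              - if n = p.1 then 2 * lnZ c σ p.1 else 0) := by
        refine Finset.sum_le_sum fun n _ => ?_
        split_ifs with h
        · subst h
          have k1 : (1:ℝ) ≤ k p.1 := by exact_mod_cast hk.1
          have k2 : (1:ℝ) ≤ k' p.1 := by exact_mod_cast hk.2
          have : |(k p.1 : ℝ) - (k' p.1 : ℝ)| ≤ k p.1 + k' p.1 - 2 := by
            rw [abs_le]; constructor <;> linarith
          have := mul_le_mul_of_nonneg_right this (hf0 p.1)
          linarith
        · have := mul_le_mul_of_nonneg_right (hkk n) (hf0 n)
          linarith
      rw [Finset.sum_sub_distrib, Finset.sum_ite_eq' , if_pos hin] at hle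
      have hs := hsum (fun p => lnZ c σ p.1)
      simp only at hs
      rw [← hs, ← h1] at hle
      apply hfin
      have := mul_nonneg (by positivity : (0:ℝ) ≤ 3 ^ σ) (hS0 t)
      linarith
    · have ht := hTR t (fun r hr => hpm r (by simp [hr]))
      obtain ⟨b1, b2⟩ := core_case p.1 q.1 p.2 q.2 m (V p.1) (V q.1) _ _ _ _
        (hpm p (by simp)) (hpm q (by simp)) (hV _) (hV _) ht.1 ht.2 hB5.1 hB5.2 hsm hmom hcan
      have c1 := hbd _ t b1
      have c2 := hbd _ t b2
      apply hfin
      linarith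
end

section
/- Let σ > 2. Let a, k, k' : ℤ → ℕ be finitely supported and not all zero, let Ṽ : ℤ → ℝ satisfy |Ṽ_n| ≤ 2 for all n, and assume |Σ_{n∈ℤ} (k_n − k'_n)(n² + Ṽ_n)| ≤ 1. Let (n_i*)_{i≥1} be the decreasing rearrangement of the finite multiset in which each |n| (n ∈ ℤ) is repeated 2a_n + k_n + k'_n times. Then Σ_{n∈ℤ} |k_n − k'_n|·ln^σ⌊n⌋ ≤ 6·4^σ·( Σ_{n∈ℤ} (2a_n + k_n + k'_n)·ln^σ⌊n⌋ − 2·ln^σ⌊n₁*⌋ + 2·ln^σ⌊m*(k,k')⌋ ). -/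
/-- `ln^σ` of `max c t`. -/
noncomputable def FF (c σ t : ℝ) : ℝ := Real.log (max c t) ^ σ

section aux
variable {σ c : ℝ}

lemma c_gt (hc : Real.exp 1 ≤ c) : 2.7 < c := by
  have := Real.exp_one_gt_d9
  linarith

lemma log_ge (hc : Real.exp 1 ≤ c) (t : ℝ) : 1 ≤ Real.log (max c t) := by
  rw [Real.le_log_iff_exp_le (lt_of_lt_of_le (Real.exp_pos 1) (hc.trans (le_max_left _ _)))]
  exact hc.trans (le_max_left _ _)

lemma FF_nonneg (hc : Real.exp 1 ≤ c) (t : ℝ) : 0 ≤ FF c σ t :=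
  Real.rpow_nonneg (by linarith [log_ge hc t]) _

lemma log_pow_mono (hσ : 2 < σ) (hc : Real.exp 1 ≤ c) {s t : ℝ} (hs : c ≤ s) (h : s ≤ t) :
    Real.log s ^ σ ≤ Real.log t ^ σ := by
  have h1 := log_ge hc s
  rw [max_eq_right hs] at h1
  have h2 := c_gt hc
  exact Real.rpow_le_rpow (by linarith) (Real.log_le_log (by linarith) h) (by linarith)

lemma FF_mono (hσ : 2 < σ) (hc : Real.exp 1 ≤ c) {s t : ℝ} (h : s ≤ t) :
    FF c σ s ≤ FF c σ t :=
  log_pow_mono hσ hc (le_max_left _ _) (max_le_max le_rfl h)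

lemma FF_half (hσ : 2 < σ) (hc : Real.exp 1 ≤ c)
    (hsub : ∀ x y : ℝ, c ≤ y → y ≤ x →
      Real.log (x + y) ^ σ ≤ Real.log x ^ σ + (1 / 2) * Real.log y ^ σ)
    {x y : ℝ} (hy : 0 ≤ y) (h : y ≤ x) :
    FF c σ (x + y) ≤ FF c σ x + (1 / 2) * FF c σ y := by
  refine le_trans ?_ (hsub (max c x) (max c y) (le_max_left _ _) (max_le_max le_rfl h))
  refine log_pow_mono hσ hc (le_max_left _ _) ?_
  have h2 := c_gt hc
  have := le_max_left c x
  have := le_max_left c y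
  have := le_max_right c x
  have := le_max_right c y
  exact max_le (by linarith) (by linarith)

lemma FF_sub (hσ : 2 < σ) (hc : Real.exp 1 ≤ c)
    (hsub : ∀ x y : ℝ, c ≤ y → y ≤ x →
      Real.log (x + y) ^ σ ≤ Real.log x ^ σ + (1 / 2) * Real.log y ^ σ)
    {x y : ℝ} (hx : 0 ≤ x) (hy : 0 ≤ y) :
    FF c σ (x + y) ≤ FF c σ x + FF c σ y := by
  have p1 := FF_nonneg (σ := σ) hc x
  have p2 := FF_nonneg (σ := σ) hc y
  rcases le_total y x with h | h
  · linarith [FF_half hσ hc hsub hy h]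
  · have := FF_half hσ hc hsub hx h
    rw [add_comm y x] at this
    linarith

lemma msum_nonneg (S : Multiset ℤ) (g : ℤ → ℝ) (hg : ∀ n, 0 ≤ g n) : 0 ≤ (S.map g).sum := by
  induction S using Multiset.induction_on with
  | empty => simp
  | cons a S ih => simp only [Multiset.map_cons, Multiset.sum_cons]; linarith [hg a]

lemma msum_abs (S : Multiset ℤ) (g h : ℤ → ℝ) (hg : ∀ n, |g n| ≤ h n) :
    |(S.map g).sum| ≤ (S.map h).sum := by
  induction S using Multiset.induction_on with
  | empty => simp
  | cons a S ih =>
    simp only [Multiset.map_cons, Multiset.sum_cons]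
    linarith [hg a, abs_add_le (g a) (S.map g).sum]

lemma msum_le {S T : Multiset ℤ} (h : S ≤ T) (g : ℤ → ℝ) (hg : ∀ n, 0 ≤ g n) :
    (S.map g).sum ≤ (T.map g).sum := by
  obtain ⟨U, rfl⟩ := Multiset.le_iff_exists_add.1 h
  rw [Multiset.map_add, Multiset.sum_add]
  linarith [msum_nonneg U g hg]

lemma FF_sum_half (hσ : 2 < σ) (hc : Real.exp 1 ≤ c)
    (hsub : ∀ x y : ℝ, c ≤ y → y ≤ x →
      Real.log (x + y) ^ σ ≤ Real.log x ^ σ + (1 / 2) * Real.log y ^ σ)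
    {x : ℝ} (S : Multiset ℤ) (hS : ∀ n ∈ S, |(n : ℝ)| ≤ x) :
    FF c σ (x + (S.map (fun n : ℤ => |(n : ℝ)|)).sum)
      ≤ FF c σ x + (1 / 2) * (S.map (fun n : ℤ => FF c σ |(n : ℝ)|)).sum := by
  induction S using Multiset.induction_on with
  | empty => simp
  | cons a S ih =>
    simp only [Multiset.map_cons, Multiset.sum_cons]
    have h1 := ih (fun n hn => hS n (Multiset.mem_cons_of_mem hn))
    have h2 := hS a (Multiset.mem_cons_self a S)
    have h3 := msum_nonneg S (fun n : ℤ => |(n : ℝ)|) (fun n => abs_nonneg _)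
    have h4 := FF_half hσ hc hsub (abs_nonneg (a : ℝ))
      (show |(a : ℝ)| ≤ x + (S.map (fun n : ℤ => |(n : ℝ)|)).sum by linarith)
    rw [show x + (|(a : ℝ)| + (S.map (fun n : ℤ => |(n : ℝ)|)).sum)
      = x + (S.map (fun n : ℤ => |(n : ℝ)|)).sum + |(a : ℝ)| by ring]
    linarith

lemma FF_sum_sub (hσ : 2 < σ) (hc : Real.exp 1 ≤ c)
    (hsub : ∀ x y : ℝ, c ≤ y → y ≤ x →
      Real.log (x + y) ^ σ ≤ Real.log x ^ σ + (1 / 2) * Real.log y ^ σ)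
    {x : ℝ} (hx : 0 ≤ x) (S : Multiset ℤ) (g : ℤ → ℝ) (hg : ∀ n, 0 ≤ g n) :
    FF c σ (x + (S.map g).sum) ≤ FF c σ x + (S.map (fun n => FF c σ (g n))).sum := by
  induction S using Multiset.induction_on with
  | empty => simp
  | cons a S ih =>
    simp only [Multiset.map_cons, Multiset.sum_cons]
    have h3 := msum_nonneg S g hg
    have h4 := FF_sub hσ hc hsub (show 0 ≤ x + (S.map g).sum by linarith) (hg a)
    rw [show x + (g a + (S.map g).sum) = x + (S.map g).sum + g a by ring]
    linarith

lemma FF_sq (hc : Real.exp 1 ≤ c) (t : ℝ) :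
    FF c σ ((max c t) ^ 2) = 2 ^ σ * FF c σ t := by
  have h2 := c_gt hc
  have h3 := le_max_left c t
  have h1 := log_ge hc t
  unfold FF
  rw [max_eq_right (by nlinarith), Real.log_pow, Nat.cast_ofNat,
    Real.mul_rpow (by norm_num) (by linarith)]

lemma pair_real (u v : ℤ) (eu ev vu vv R1 R2 m A Q : ℝ)
    (hu : eu = 1 ∨ eu = -1) (hv : ev = 1 ∨ ev = -1) (huv : u = v → eu = ev)
    (hvu : |vu| ≤ 2) (hvv : |vv| ≤ 2) (hA : |R1| ≤ A) (hQ : |R2| ≤ Q)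
    (hm : eu * u + (ev * v + R1) = m)
    (hs : |eu * ((u : ℝ) ^ 2 + vu) + (ev * ((v : ℝ) ^ 2 + vv) + R2)| ≤ 1) :
    2 * |(u : ℝ)| ≤ |m| + 5 + A + Q := by
  have key : eu = ev ∨ (eu = -ev ∧ u ≠ v) := by
    by_cases h : eu = ev
    · exact Or.inl h
    · right
      refine ⟨?_, fun h' => h (huv h')⟩
      rcases hu with rfl | rfl <;> rcases hv with rfl | rfl <;> simp_all
  have hA0 : 0 ≤ A := (abs_nonneg _).trans hA
  have hQ0 : 0 ≤ Q := (abs_nonneg _).trans hQ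
  have hm0 := abs_nonneg m
  rw [abs_le] at hvu hvv hA hQ hs
  obtain ⟨a1, a2⟩ := hvu
  obtain ⟨b1, b2⟩ := hvv
  obtain ⟨c1, c2⟩ := hA
  obtain ⟨d1, d2⟩ := hQ
  obtain ⟨e1, e2⟩ := hs
  rcases key with h | ⟨h, hne⟩
  · subst h
    have hsq : (u : ℝ) ^ 2 ≤ Q + 5 := by
      rcases hu with rfl | rfl <;> nlinarith [sq_nonneg (v : ℝ)]
    have : 2 * |(u : ℝ)| ≤ Q + 5 := by
      rw [← sq_abs] at hsq
      nlinarith [sq_nonneg (|(u : ℝ)| - 1), abs_nonneg (u : ℝ)]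
    linarith
  · have hd : (1 : ℝ) ≤ |(u : ℝ) - v| := by
      have : (1 : ℤ) ≤ |u - v| := Int.one_le_abs (sub_ne_zero.2 hne)
      exact_mod_cast this
    have hp : |((u : ℝ) - v) * (u + v)| ≤ Q + 5 := by
      rw [abs_le]
      rcases hv with rfl | rfl <;> subst h <;> constructor <;> nlinarith
    rw [abs_mul] at hp
    have hp2 : |(u : ℝ) + v| ≤ Q + 5 := by nlinarith [abs_nonneg ((u : ℝ) + v)]
    have hdiff : |(u : ℝ) - v| ≤ |m| + A := by
      have g1 := neg_abs_le m
      have g2 := le_abs_self m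
      rw [abs_le]
      rcases hv with rfl | rfl <;> subst h <;> constructor <;> linarith
    have : 2 * |(u : ℝ)| ≤ |(u : ℝ) + v| + |(u : ℝ) - v| := by
      have h1 := abs_add_le ((u : ℝ) + v) (u - v)
      rw [show (u : ℝ) + v + (u - v) = 2 * u by ring, abs_mul] at h1
      simpa using h1
    linarith

lemma pair_bound (hσ : 2 < σ) (hc : Real.exp 1 ≤ c)
    (hsub : ∀ x y : ℝ, c ≤ y → y ≤ x →
      Real.log (x + y) ^ σ ≤ Real.log x ^ σ + (1 / 2) * Real.log y ^ σ)
    (V : ℤ → ℝ) (hV : ∀ n, |V n| ≤ 2) (e : ℤ → ℝ) (he : ∀ n, e n = 1 ∨ e n = -1)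
    (u v : ℤ) (B : Multiset ℤ) (m : ℝ)
    (hm : ((u ::ₘ v ::ₘ B).map (fun n => e n * (n : ℝ))).sum = m)
    (hs : |((u ::ₘ v ::ₘ B).map (fun n => e n * ((n : ℝ) ^ 2 + V n))).sum| ≤ 1) :
    FF c σ |(u : ℝ)| ≤ 2 ^ σ * (FF c σ |m| + (B.map (fun n : ℤ => FF c σ |(n : ℝ)|)).sum) := by
  have he1 : ∀ n, |e n| = 1 := fun n => by rcases he n with h | h <;> simp [h]
  simp only [Multiset.map_cons, Multiset.sum_cons] at hm hs
  have hp := pair_real u v (e u) (e v) (V u) (V v) _ _ m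
    (B.map (fun n : ℤ => |(n : ℝ)|)).sum (B.map (fun n : ℤ => (n : ℝ) ^ 2 + 2)).sum
    (he u) (he v) (fun h => by rw [h]) (hV u) (hV v)
    (msum_abs B (fun n => e n * (n : ℝ)) _ (fun n => by rw [abs_mul, he1, one_mul]))
    (msum_abs B (fun n => e n * ((n : ℝ) ^ 2 + V n)) _ (fun n => by
      rw [abs_mul, he1, one_mul]
      refine (abs_add_le _ _).trans ?_
      rw [abs_of_nonneg (sq_nonneg _)]
      linarith [hV n])) hm hs
  have h2 := c_gt hc
  have hle : ∀ S : Multiset ℤ, (S.map (fun n : ℤ => |(n : ℝ)|)).sum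
      + (S.map (fun n : ℤ => (n : ℝ) ^ 2 + 2)).sum
      ≤ 2 * (S.map (fun n : ℤ => (max c |(n : ℝ)|) ^ 2)).sum := by
    intro S
    induction S using Multiset.induction_on with
    | empty => simp
    | cons a S ih =>
      simp only [Multiset.map_cons, Multiset.sum_cons]
      have g1 := le_max_left c |(a : ℝ)|
      have g2 := le_max_right c |(a : ℝ)|
      have g3 := sq_abs (a : ℝ)
      have g4 := abs_nonneg (a : ℝ)
      have : |(a : ℝ)| + ((a : ℝ) ^ 2 + 2) ≤ 2 * (max c |(a : ℝ)|) ^ 2 := by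
        rw [← g3]
        nlinarith
      linarith
  have hmm : |m| + 5 ≤ 2 * (max c |m|) ^ 2 := by
    have g1 := le_max_left c |m|
    have g2 := le_max_right c |m|
    nlinarith
  have hu : |(u : ℝ)| ≤ (max c |m|) ^ 2 + (B.map (fun n : ℤ => (max c |(n : ℝ)|) ^ 2)).sum := by
    linarith [hle B]
  refine (FF_mono hσ hc hu).trans ?_
  refine (FF_sum_sub hσ hc hsub (sq_nonneg _) B _ (fun n => sq_nonneg _)).trans ?_
  simp only [FF_sq hc]
  rw [Multiset.sum_map_mul_left, mul_add]

lemma single_bound (hσ : 2 < σ) (hc : Real.exp 1 ≤ c)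
    (hsub : ∀ x y : ℝ, c ≤ y → y ≤ x →
      Real.log (x + y) ^ σ ≤ Real.log x ^ σ + (1 / 2) * Real.log y ^ σ)
    (e : ℤ → ℝ) (he : ∀ n, e n = 1 ∨ e n = -1)
    (u : ℤ) (B : Multiset ℤ) (m : ℝ)
    (hm : ((u ::ₘ B).map (fun n => e n * (n : ℝ))).sum = m) :
    |(u : ℝ)| ≤ |m| + (B.map (fun n : ℤ => |(n : ℝ)|)).sum ∧
    FF c σ |(u : ℝ)| ≤ FF c σ |m| + (B.map (fun n : ℤ => FF c σ |(n : ℝ)|)).sum := by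
  have he1 : ∀ n, |e n| = 1 := fun n => by rcases he n with h | h <;> simp [h]
  simp only [Multiset.map_cons, Multiset.sum_cons] at hm
  have h1 := msum_abs B (fun n => e n * (n : ℝ)) _ (fun n => by rw [abs_mul, he1, one_mul])
  have h2 : |(u : ℝ)| = |e u * u| := by rw [abs_mul, he1, one_mul]
  have h3 : e u * u = m - (B.map (fun n => e n * (n : ℝ))).sum := by linarith
  have h4 : |(u : ℝ)| ≤ |m| + (B.map (fun n : ℤ => |(n : ℝ)|)).sum := by
    rw [h2, h3]
    linarith [abs_sub m (B.map (fun n => e n * (n : ℝ))).sum]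
  exact ⟨h4, (FF_mono hσ hc h4).trans
    (FF_sum_sub hσ hc hsub (abs_nonneg _) B _ (fun n => abs_nonneg _))⟩

lemma lhs_bound (hσ : 2 < σ) (hc : Real.exp 1 ≤ c)
    (hsub : ∀ x y : ℝ, c ≤ y → y ≤ x →
      Real.log (x + y) ^ σ ≤ Real.log x ^ σ + (1 / 2) * Real.log y ^ σ)
    (V : ℤ → ℝ) (hV : ∀ n, |V n| ≤ 2) (e : ℤ → ℝ) (he : ∀ n, e n = 1 ∨ e n = -1)
    (u v : ℤ) (B M : Multiset ℤ) (hB : B ≤ u ::ₘ v ::ₘ M) (m : ℝ)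
    (hm : (B.map (fun n => e n * (n : ℝ))).sum = m)
    (hs : |(B.map (fun n => e n * ((n : ℝ) ^ 2 + V n))).sum| ≤ 1) :
    (B.map (fun n : ℤ => FF c σ |(n : ℝ)|)).sum
      ≤ (2 * 2 ^ σ + 1) * (FF c σ |m| + (M.map (fun n : ℤ => FF c σ |(n : ℝ)|)).sum) := by
  have hK : (1 : ℝ) ≤ 2 ^ σ := Real.one_le_rpow (by norm_num) (by linarith)
  have hF := FF_nonneg (σ := σ) hc |m|
  have hn : ∀ n : ℤ, 0 ≤ FF c σ |(n : ℝ)| := fun n => FF_nonneg hc _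
  have hSM := msum_nonneg M _ hn
  have hsingle : ∀ w B1, B = w ::ₘ B1 → B1 ≤ M →
    (B.map (fun n : ℤ => FF c σ |(n : ℝ)|)).sum
      ≤ (2 * 2 ^ σ + 1) * (FF c σ |m| + (M.map (fun n : ℤ => FF c σ |(n : ℝ)|)).sum) := by
    rintro w B1 rfl h
    have h1 := (single_bound hσ hc hsub e he w B1 m hm).2
    have h2 := msum_le h _ hn
    simp only [Multiset.map_cons, Multiset.sum_cons]
    nlinarith
  by_cases hu : u ∈ B
  · obtain ⟨B1, rfl⟩ := Multiset.exists_cons_of_mem hu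
    have hB1 := (Multiset.cons_le_cons_iff u).1 hB
    by_cases hv : v ∈ B1
    · obtain ⟨B2, rfl⟩ := Multiset.exists_cons_of_mem hv
      have hB2 := (Multiset.cons_le_cons_iff v).1 hB1
      have h1 := pair_bound hσ hc hsub V hV e he u v B2 m hm hs
      rw [Multiset.cons_swap] at hm hs
      have h2 := pair_bound hσ hc hsub V hV e he v u B2 m hm hs
      have h3 := msum_le hB2 _ hn
      simp only [Multiset.map_cons, Multiset.sum_cons]
      nlinarith
    · exact hsingle u B1 rfl ((Multiset.le_cons_of_notMem hv).1 hB1)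
  · have hB1 := (Multiset.le_cons_of_notMem hu).1 hB
    by_cases hv : v ∈ B
    · obtain ⟨B2, rfl⟩ := Multiset.exists_cons_of_mem hv
      exact hsingle v B2 rfl ((Multiset.cons_le_cons_iff v).1 hB1)
    · have h3 := msum_le ((Multiset.le_cons_of_notMem hv).1 hB1) _ hn
      nlinarith

lemma core (hσ : 2 < σ) (hc : Real.exp 1 ≤ c)
    (hsub : ∀ x y : ℝ, c ≤ y → y ≤ x →
      Real.log (x + y) ^ σ ≤ Real.log x ^ σ + (1 / 2) * Real.log y ^ σ)
    (V : ℤ → ℝ) (hV : ∀ n, |V n| ≤ 2) (e : ℤ → ℝ) (he : ∀ n, e n = 1 ∨ e n = -1)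
    (x : ℤ) (B M : Multiset ℤ) (hB : B ≤ x ::ₘ M)
    (hx : ∀ y ∈ M, |(y : ℝ)| ≤ |(x : ℝ)|) (hxM : x ∈ M ∨ x ∈ B) (m : ℝ)
    (hm : (B.map (fun n => e n * (n : ℝ))).sum = m)
    (hs : |(B.map (fun n => e n * ((n : ℝ) ^ 2 + V n))).sum| ≤ 1) :
    (B.map (fun n : ℤ => FF c σ |(n : ℝ)|)).sum
      ≤ 6 * 4 ^ σ * (((x ::ₘ M).map (fun n : ℤ => FF c σ |(n : ℝ)|)).sum
        - 2 * FF c σ |(x : ℝ)| + 2 * FF c σ |m|) := by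
  have hK : (1 : ℝ) ≤ 2 ^ σ := Real.one_le_rpow (by norm_num) (by linarith)
  have hF := FF_nonneg (σ := σ) hc |m|
  have hn : ∀ n : ℤ, 0 ≤ FF c σ |(n : ℝ)| := fun n => FF_nonneg hc _
  have h4 : (4 : ℝ) ^ σ = 2 ^ σ * 2 ^ σ := by
    rw [← Real.mul_rpow (by norm_num) (by norm_num)]; norm_num
  rw [h4]
  have hxB : x ∈ B → |(x : ℝ)| ≤ |m| + (M.map (fun n : ℤ => |(n : ℝ)|)).sum := by
    intro h
    obtain ⟨B1, rfl⟩ := Multiset.exists_cons_of_mem h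
    have hB1 := (Multiset.cons_le_cons_iff x).1 hB
    have := (single_bound hσ hc hsub e he x B1 m hm).1
    linarith [msum_le hB1 (fun n : ℤ => |(n : ℝ)|) (fun n => abs_nonneg _)]
  rcases Multiset.empty_or_exists_mem M with rfl | ⟨y, hy⟩
  · have hxm : FF c σ |(x : ℝ)| ≤ FF c σ |m| := by
      refine FF_mono hσ hc ?_
      simpa using hxB (by simpa using hxM)
    have h1 := msum_le hB _ hn
    simp only [Multiset.map_cons, Multiset.sum_cons, Multiset.map_zero, Multiset.sum_zero] at h1 ⊢
    generalize (2 : ℝ) ^ σ = K at *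
    have hKK : 1 ≤ K * K := by nlinarith
    nlinarith
  · obtain ⟨z, hz, hzmax⟩ := Finset.exists_max_image M.toFinset (fun n : ℤ => |(n : ℝ)|)
      ⟨y, by simpa using hy⟩
    rw [Multiset.mem_toFinset] at hz
    obtain ⟨N, rfl⟩ := Multiset.exists_cons_of_mem hz
    have hL := lhs_bound hσ hc hsub V hV e he x z B N hB m hm hs
    have hN := msum_nonneg N _ hn
    have hbr : FF c σ |(x : ℝ)| ≤ FF c σ |m| + (FF c σ |(z : ℝ)|
        + 1 / 2 * (N.map (fun n : ℤ => FF c σ |(n : ℝ)|)).sum) := by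
      by_cases hxz : x ∈ z ::ₘ N
      · have := FF_mono (σ := σ) hσ hc (hzmax x (by simpa using hxz))
        linarith
      · have h1 := hxB (hxM.resolve_left hxz)
        simp only [Multiset.map_cons, Multiset.sum_cons] at h1
        have h2 := msum_nonneg N (fun n : ℤ => |(n : ℝ)|) (fun n => abs_nonneg _)
        have h3 := FF_sum_half hσ hc hsub (x := |(z : ℝ)|) N (fun n hn => hzmax n (by simp [hn]))
        have h4 := FF_sub hσ hc hsub (abs_nonneg m)
          (show 0 ≤ |(z : ℝ)| + (N.map (fun n : ℤ => |(n : ℝ)|)).sum by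
            linarith [abs_nonneg (z : ℝ)])
        linarith [FF_mono (σ := σ) hσ hc h1]
    simp only [Multiset.map_cons, Multiset.sum_cons]
    generalize (2 : ℝ) ^ σ = K at *
    generalize (N.map (fun n : ℤ => FF c σ |(n : ℝ)|)).sum = S at *
    have hKK : K ≤ K * K := by nlinarith
    have hb : FF c σ |m| + 1 / 2 * S ≤ FF c σ |(x : ℝ)| + (FF c σ |(z : ℝ)| + S)
        - 2 * FF c σ |(x : ℝ)| + 2 * FF c σ |m| := by linarith
    have h5 := mul_le_mul_of_nonneg_left hb (show 0 ≤ 6 * (K * K) by nlinarith)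
    have h6 : (2 * K + 1) * (FF c σ |m| + S) ≤ 3 * (K * K) * (FF c σ |m| + S) :=
      mul_le_mul_of_nonneg_right (by nlinarith) (by linarith)
    have h7 : 0 ≤ K * K * FF c σ |m| := by positivity
    linarith

end aux

lemma descList_head (M : Multiset ℕ) (hM : M ≠ 0) :
    (descList M).headI ∈ M ∧ ∀ y ∈ M, y ≤ (descList M).headI := by
  have hmem : ∀ y, y ∈ descList M ↔ y ∈ M := fun y => by simp [descList]
  have hp : (descList M).Pairwise (fun a b => b ≤ a) := by
    unfold descList
    rw [List.pairwise_reverse]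
    exact Multiset.pairwise_sort M (· ≤ ·)
  rcases hl : descList M with _ | ⟨h, t⟩
  · exfalso
    obtain ⟨y, hy⟩ := Multiset.exists_mem_of_ne_zero hM
    rw [← hmem, hl] at hy
    simp at hy
  · rw [hl] at hp
    refine ⟨by rw [← hmem, hl]; simp, fun y hy => ?_⟩
    rw [← hmem, hl] at hy
    rcases List.mem_cons.1 hy with rfl | hy
    · simp
    · exact (List.pairwise_cons.1 hp).1 y hy

lemma sum_conv (w : ℤ →₀ ℕ) (s : Finset ℤ) (hs : w.support ⊆ s) (g : ℤ → ℝ) :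
    ((Finsupp.toMultiset w).map g).sum = ∑ n ∈ s, (w n : ℝ) * g n := by
  rw [Finset.sum_multiset_map_count, Finsupp.toFinset_toMultiset]
  simp only [Finsupp.count_toMultiset, nsmul_eq_mul]
  refine Finset.sum_subset hs (fun n _ hn => ?_)
  rw [Finsupp.notMem_support_iff.1 hn]
  simp

lemma lnZ_eq (c σ : ℝ) (n : ℤ) : lnZ c σ n = FF c σ |(n : ℝ)| := rfl

lemma lnN_eq (c σ : ℝ) (n : ℤ) : lnN c σ n.natAbs = FF c σ |(n : ℝ)| := by
  unfold lnN FF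
  rw [Nat.cast_natAbs, Int.cast_abs]


/-- inequality (62) of the paper. If `|Ṽₙ| ≤ 2` for all `n` and
`|∑ₙ (kₙ - k'ₙ)(n² + Ṽₙ)| ≤ 1`, then
`∑ₙ |kₙ - k'ₙ|·ln^σ⌊n⌋ ≤ 6·4^σ·( ∑ₙ (2aₙ + kₙ + k'ₙ)·ln^σ⌊n⌋ − 2·ln^σ⌊n₁*⌋ + 2·ln^σ⌊m*(k,k')⌋ )`,
where `n₁*` is the largest entry of the multiset with each `|n|` repeated `2aₙ+kₙ+k'ₙ` times. -/
theorem full_dim_KAM_stmt4 (σ : ℝ) (hσ : 2 < σ) (c : ℝ) (hc : Real.exp 1 ≤ c)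
    (hsub : ∀ x y : ℝ, c ≤ y → y ≤ x →
      Real.log (x + y) ^ σ ≤ Real.log x ^ σ + (1 / 2) * Real.log y ^ σ)
    (a k k' : ℤ →₀ ℕ) (hne : ¬(a = 0 ∧ k = 0 ∧ k' = 0))
    (V : ℤ → ℝ) (hV : ∀ n, |V n| ≤ 2)
    (hsmall : |∑ n ∈ k.support ∪ k'.support,
        ((k n : ℝ) - (k' n : ℝ)) * ((n : ℝ) ^ 2 + V n)| ≤ 1) :
    ∑ n ∈ k.support ∪ k'.support, |(k n : ℝ) - (k' n : ℝ)| * lnZ c σ n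
      ≤ 6 * (4 : ℝ) ^ σ *
        ((∑ n ∈ a.support ∪ k.support ∪ k'.support,
            ((2 * a n + k n + k' n : ℕ) : ℝ) * lnZ c σ n)
          - 2 * lnN c σ (descList (reps a k k')).headI
          + 2 * lnN c σ (momentum k k').natAbs) := by
  set w : ℤ →₀ ℕ := a + a + k + k' with hw
  set b : ℤ →₀ ℕ := (k - k') + (k' - k) with hb
  have hwn : ∀ n, w n = 2 * a n + k n + k' n := fun n => by
    simp only [hw, Finsupp.add_apply]; ring
  have hbn : ∀ n, b n = (k n - k' n) + (k' n - k n) := fun n => by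
    simp only [hb, Finsupp.add_apply, Finsupp.tsub_apply]
  set e : ℤ → ℝ := fun n => if k' n ≤ k n then 1 else -1 with he
  have he1 : ∀ n, e n = 1 ∨ e n = -1 := fun n => by
    by_cases h : k' n ≤ k n <;> simp [he, h]
  have hbe : ∀ n, (b n : ℝ) * e n = (k n : ℝ) - k' n := fun n => by
    rw [hbn]
    by_cases h : k' n ≤ k n
    · simp [he, h]
    · have h' : k n ≤ k' n := by omega
      simp [he, h, Nat.sub_eq_zero_of_le h', Nat.cast_sub h']
  have hbabs : ∀ n, (b n : ℝ) = |(k n : ℝ) - k' n| := fun n => by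
    rw [← hbe, abs_mul, Nat.abs_cast]
    rcases he1 n with h | h <;> simp [h]
  have hbs : b.support ⊆ k.support ∪ k'.support := fun n hn => by
    simp only [Finset.mem_union, Finsupp.mem_support_iff, hbn] at hn ⊢
    omega
  have hws : w.support ⊆ a.support ∪ k.support ∪ k'.support := fun n hn => by
    simp only [Finset.mem_union, Finsupp.mem_support_iff, hwn] at hn ⊢
    omega
  have hmemw : ∀ n, n ∈ Finsupp.toMultiset w ↔ w n ≠ 0 := fun n => by
    rw [Finsupp.mem_toMultiset, Finsupp.mem_support_iff]
  have hreps : ∀ y, y ∈ reps a k k' ↔ ∃ n, w n ≠ 0 ∧ n.natAbs = y := fun y => by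
    simp only [reps, Multiset.mem_bind, Multiset.mem_replicate, Finset.mem_val, Finset.mem_union,
      Finsupp.mem_support_iff, hwn]
    constructor
    · rintro ⟨n, -, h1, h2⟩
      exact ⟨n, h1, h2.symm⟩
    · rintro ⟨n, h1, h2⟩
      exact ⟨n, by omega, h1, h2.symm⟩
  have hr0 : reps a k k' ≠ 0 := by
    intro h0
    have hz : ∀ n, w n = 0 := fun n => by
      by_contra hn
      have := (hreps n.natAbs).2 ⟨n, hn, rfl⟩
      rw [h0] at this
      simp at this
    refine hne ⟨?_, ?_, ?_⟩ <;> ext n <;> have := hz n <;> rw [hwn] at this <;>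
      simp only [Finsupp.coe_zero, Pi.zero_apply] <;> omega
  obtain ⟨hh1, hh2⟩ := descList_head _ hr0
  obtain ⟨x, hx0, hxh⟩ := (hreps _).1 hh1
  rw [← hxh] at hh2 ⊢
  rw [lnN_eq, lnN_eq]
  have hxm : x ∈ Finsupp.toMultiset w := (hmemw x).2 hx0
  have hcons := Multiset.cons_erase hxm
  have hcore := core hσ hc hsub V hV e he1 x (Finsupp.toMultiset b)
    ((Finsupp.toMultiset w).erase x) ?_ ?_ ?_ (momentum k k' : ℝ) ?_ ?_
  · rw [hcons, sum_conv w _ hws, sum_conv b _ hbs] at hcore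
    simp only [lnZ_eq, ← hwn, ← hbabs]
    exact hcore
  · rw [hcons, Multiset.le_iff_count]
    intro n
    rw [Finsupp.count_toMultiset, Finsupp.count_toMultiset, hwn, hbn]
    omega
  · intro y hy
    have h1 := hh2 _ ((hreps y.natAbs).2 ⟨y, (hmemw y).1 (Multiset.mem_of_mem_erase hy), rfl⟩)
    have h2 : |y| ≤ |x| := by rw [Int.abs_eq_natAbs, Int.abs_eq_natAbs]; exact_mod_cast h1
    exact_mod_cast h2
  · rw [← Multiset.one_le_count_iff_mem, Multiset.count_erase_self, Finsupp.count_toMultiset,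
      Finsupp.mem_toMultiset, Finsupp.mem_support_iff, hbn, hwn]
    rw [hwn] at hx0
    omega
  · rw [sum_conv b _ hbs]
    unfold momentum
    push_cast
    refine Finset.sum_congr rfl (fun n _ => ?_)
    rw [← mul_assoc, hbe]
  · rw [sum_conv b _ hbs]
    simp only [← mul_assoc, hbe]
    exact hsmall
end

section
/- For every real σ > 2 and every δ ∈ (0,1), the series Σ_{j≥1} exp(−δ·(ln j)^σ) converges and Σ_{j≥1} exp(−δ·(ln j)^σ) ≤ (6/δ)·exp( (1/δ)^{1/(σ−1)} ). -/
theorem key_exponent (σ δ x : ℝ) (hσ : 2 < σ) (h0 : 0 < δ)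
    (hx : (1 / δ) ^ (1 / (σ - 1)) ≤ x) :
    2 * x - (1 / δ) ^ (1 / (σ - 1)) ≤ δ * x ^ σ := by
  set T := (1 / δ) ^ (1 / (σ - 1)) with hT
  have hTp : 0 < T := by positivity
  have hxp : 0 < x := lt_of_lt_of_le hTp hx
  have hTs : T ^ (σ - 1) = 1 / δ := by
    rw [hT, ← Real.rpow_mul (by positivity), one_div_mul_cancel (by linarith), Real.rpow_one]
  have h1 : x / T ≤ (x / T) ^ (σ - 1) := by
    have : 1 ≤ x / T := by rwa [one_le_div hTp]
    calc x / T = (x / T) ^ (1 : ℝ) := (Real.rpow_one _).symm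
      _ ≤ _ := Real.rpow_le_rpow_of_exponent_le this (by linarith)
  rw [Real.div_rpow hxp.le hTp.le, hTs] at h1
  have h2 : x ^ σ = x ^ (σ - 1) * x := by
    rw [← Real.rpow_add_one hxp.ne']; congr 1; ring
  have h3 : x ^ (σ - 1) / (1 / δ) = δ * x ^ (σ - 1) := by field_simp
  rw [h3] at h1
  rw [h2, ← mul_assoc]
  have h4 : 2 * x - T ≤ x / T * x := by
    rw [div_mul_eq_mul_div, le_div_iff₀ hTp]
    nlinarith [sq_nonneg (x - T)]
  exact h4.trans (mul_le_mul_of_nonneg_right h1 hxp.le)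

/-- Lemma 5.5 of the paper. For `σ > 2` and `δ ∈ (0,1)`, the series
`∑_{j≥1} exp(−δ·(ln j)^σ)` converges and is at most `(6/δ)·exp((1/δ)^{1/(σ−1)})`. -/
theorem full_dim_KAM_stmt7 (σ δ : ℝ) (hσ : 2 < σ) (hδ : δ ∈ Set.Ioo (0 : ℝ) 1) :
    Summable (fun j : ℕ+ => Real.exp (-δ * Real.log (j : ℝ) ^ σ)) ∧
    ∑' j : ℕ+, Real.exp (-δ * Real.log (j : ℝ) ^ σ)
      ≤ (6 / δ) * Real.exp ((1 / δ) ^ (1 / (σ - 1))) := by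
  obtain ⟨h0, h1⟩ := hδ
  have key := fun x => key_exponent σ δ x hσ h0
  set T := (1 / δ) ^ (1 / (σ - 1)) with hT
  set N := ⌊Real.exp T⌋₊ with hN
  let h : ℕ → ℝ := fun n => (if n ∈ Finset.Icc 1 N then 1 else 0) +
    Real.exp T * (1 / (n : ℝ) ^ 2)
  have hh : HasSum h (N + Real.exp T * (Real.pi ^ 2 / 6)) := by
    apply HasSum.add _ (hasSum_zeta_two.mul_left _)
    have := hasSum_sum_of_ne_finset_zero (L := SummationFilter.unconditional ℕ) (s := Finset.Icc 1 N)
      (f := fun n => if n ∈ Finset.Icc 1 N then (1 : ℝ) else 0)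
      (fun b hb => if_neg hb)
    rw [Finset.sum_congr rfl (fun n hn => if_pos hn)] at this
    simpa using this
  have hnn : ∀ n, 0 ≤ h n := by
    intro n
    simp only [h]
    split_ifs <;> positivity
  have hle : ∀ j : ℕ+, Real.exp (-δ * Real.log (j : ℝ) ^ σ) ≤ h (j : ℕ) := by
    intro j
    have hj : (1 : ℝ) ≤ ((j : ℕ) : ℝ) := by exact_mod_cast j.pos
    have hlog := Real.log_nonneg hj
    have hjp : (0 : ℝ) < ((j : ℕ) : ℝ) := by linarith
    simp only [h]
    by_cases hjN : (j : ℕ) ∈ Finset.Icc 1 N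
    · rw [if_pos hjN]
      have : Real.exp (-δ * Real.log (j : ℝ) ^ σ) ≤ 1 := by
        rw [Real.exp_le_one_iff]
        have := mul_nonneg h0.le (Real.rpow_nonneg hlog σ)
        linarith
      have : 0 ≤ Real.exp T * (1 / ((j : ℕ) : ℝ) ^ 2) := by positivity
      linarith
    · rw [if_neg hjN, zero_add]
      have h2 : N < (j : ℕ) := by
        by_contra hc
        exact hjN (Finset.mem_Icc.2 ⟨j.pos, not_lt.1 hc⟩)
      have h3 : Real.exp T < ((j : ℕ) : ℝ) := Nat.lt_of_floor_lt h2
      have h4 : T ≤ Real.log ((j : ℕ) : ℝ) := ((Real.lt_log_iff_exp_lt hjp).2 h3).le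
      have h5 := key _ h4
      have h6 : Real.exp T * (1 / ((j : ℕ) : ℝ) ^ 2)
          = Real.exp (T - 2 * Real.log ((j : ℕ) : ℝ)) := by
        rw [Real.exp_sub, two_mul, Real.exp_add, Real.exp_log hjp]
        ring
      rw [h6]
      apply Real.exp_le_exp.2
      linarith
  have hsc : Summable (fun j : ℕ+ => h (j : ℕ)) :=
    hh.summable.comp_injective PNat.coe_injective
  have hs : Summable (fun j : ℕ+ => Real.exp (-δ * Real.log (j : ℝ) ^ σ)) :=
    Summable.of_nonneg_of_le (fun _ => (Real.exp_pos _).le) hle hsc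
  refine ⟨hs, ?_⟩
  have a1 := hs.tsum_le_tsum hle hsc
  have a2 : ∑' j : ℕ+, h (j : ℕ) ≤ ∑' n, h n :=
    tsum_comp_le_tsum_of_inj hh.summable hnn PNat.coe_injective
  rw [hh.tsum_eq] at a2
  have hE := Real.exp_pos T
  have a3 : (N : ℝ) ≤ Real.exp T := Nat.floor_le hE.le
  have a4 : Real.pi ^ 2 / 6 ≤ 5 := by nlinarith [Real.pi_pos, Real.pi_le_four]
  have a5 : 6 ≤ 6 / δ := by rw [le_div_iff₀ h0]; linarith
  nlinarith
end

section
/- For every real σ > 2 and every δ ∈ (0,1), one has Π_{n∈ℤ} (1 − exp(−δ·ln^σ⌊n⌋))^{−1} ≤ exp( (18/δ)·exp( (4/δ)^{1/(σ−1)} ) ). -/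
/-- Lemma 5.7 of the paper. For `σ > 2` and `δ ∈ (0,1)`, the infinite product
`∏_{n∈ℤ} (1 − exp(−δ·ln^σ⌊n⌋))⁻¹` converges and is at most
`exp((18/δ)·exp((4/δ)^{1/(σ−1)}))`. -/
theorem full_dim_KAM_stmt9 (σ δ : ℝ) (hσ : 2 < σ) (hδ : δ ∈ Set.Ioo (0 : ℝ) 1)
    (c : ℝ) (hc : Real.exp 1 ≤ c)
    (hsub : ∀ x y : ℝ, c ≤ y → y ≤ x →
      Real.log (x + y) ^ σ ≤ Real.log x ^ σ + (1 / 2) * Real.log y ^ σ) :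
    Multipliable (fun n : ℤ => (1 - Real.exp (-δ * lnZ c σ n))⁻¹) ∧
    ∏' n : ℤ, (1 - Real.exp (-δ * lnZ c σ n))⁻¹
      ≤ Real.exp ((18 / δ) * Real.exp ((4 / δ) ^ (1 / (σ - 1)))) := by
  obtain ⟨hδ0, hδ1⟩ := hδ
  have hs1 : 0 < σ - 1 := by linarith
  set A : ℝ := (4 / δ) ^ (1 / (σ - 1)) with hA
  set N : ℝ := Real.exp A with hN
  have h4 : 1 ≤ 4 / δ := by rw [le_div_iff₀ hδ0]; linarith
  have hA1 : 1 ≤ A := Real.one_le_rpow h4 (by positivity)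
  have hApow : A ^ (σ - 1) = 4 / δ := by
    rw [hA, ← Real.rpow_mul (by positivity), one_div_mul_cancel hs1.ne', Real.rpow_one]
  have hN2 : 2 ≤ N := by
    have := Real.add_one_le_exp A
    linarith
  set K : ℤ := ⌊N⌋ with hK
  have hK0 : 0 ≤ K := Int.floor_nonneg.2 (by linarith)
  have hKN : (K : ℝ) ≤ N := Int.floor_le N
  let b : ℤ → ℝ := fun n => 1 / (Real.exp (δ * lnZ c σ n) - 1)
  let g₁ : ℤ → ℝ := fun n => if n ∈ Finset.Icc (-K) K then 1 / δ else 0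
  let g₂ : ℤ → ℝ := fun n => 1 / (n : ℝ) ^ 2
  have hL1 : ∀ n : ℤ, 1 ≤ Real.log (max c |(n : ℝ)|) := fun n => by
    rw [Real.le_log_iff_exp_le (lt_of_lt_of_le (Real.exp_pos 1) (hc.trans (le_max_left _ _)))]
    exact hc.trans (le_max_left _ _)
  have hx : ∀ n : ℤ, δ ≤ δ * lnZ c σ n := fun n => by
    have : 1 ≤ lnZ c σ n := Real.one_le_rpow (hL1 n) (by linarith)
    nlinarith
  have hex : ∀ n : ℤ, δ ≤ Real.exp (δ * lnZ c σ n) - 1 := fun n => by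
    have := Real.add_one_le_exp (δ * lnZ c σ n)
    linarith [hx n]
  have hb0 : ∀ n, 0 ≤ b n := fun n => by
    have := hex n
    exact div_nonneg zero_le_one (by linarith)
  have hbg : ∀ n, b n ≤ g₁ n + g₂ n := fun n => by
    have hg2 : 0 ≤ g₂ n := by simp only [g₂]; positivity
    by_cases hn : n ∈ Finset.Icc (-K) K
    · have h1 : g₁ n = 1 / δ := if_pos hn
      have h2 : b n ≤ 1 / δ := one_div_le_one_div_of_le hδ0 (hex n)
      linarith
    · have h1 : g₁ n = 0 := if_neg hn
      have hnK : K < |n| := by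
        rw [Finset.mem_Icc, ← abs_le] at hn
        exact not_le.1 hn
      have hnN : N ≤ |(n : ℝ)| := by
        have := Int.floor_lt.1 hnK
        push_cast at this
        exact this.le
      have hn0 : 0 < |(n : ℝ)| := by linarith
      have hl : A ≤ Real.log |(n : ℝ)| := (Real.le_log_iff_exp_le hn0).2 hnN
      have hl2 : Real.log |(n : ℝ)| ≤ Real.log (max c |(n : ℝ)|) :=
        Real.log_le_log hn0 (le_max_right _ _)
      have hL := hL1 n
      have hx4 : 4 * Real.log |(n : ℝ)| ≤ δ * lnZ c σ n := by
        unfold lnZ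
        set L := Real.log (max c |(n : ℝ)|)
        have e : L ^ σ = L ^ (σ - 1) * L := by
          rw [← Real.rpow_add_one (by linarith)]; congr 1; ring
        have h5 : 4 / δ ≤ L ^ (σ - 1) := by
          rw [← hApow]
          exact Real.rpow_le_rpow (by linarith) (hl.trans hl2) hs1.le
        rw [div_le_iff₀ hδ0] at h5
        rw [e]
        nlinarith
      have hexp : (n : ℝ) ^ 4 ≤ Real.exp (δ * lnZ c σ n) := by
        refine le_trans (le_of_eq ?_) (Real.exp_le_exp.2 hx4)
        have : Real.exp (4 * Real.log |(n : ℝ)|) = (Real.exp (Real.log |(n : ℝ)|)) ^ 4 := by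
          rw [← Real.exp_nat_mul]; norm_num
        rw [this, Real.exp_log hn0, ← abs_pow]
        exact (abs_of_nonneg (by positivity)).symm
      have hsq : 4 ≤ (n : ℝ) ^ 2 := by
        rw [← sq_abs]; nlinarith
      have : b n ≤ g₂ n := one_div_le_one_div_of_le (by linarith) (by nlinarith)
      linarith
  have hs₁ : HasSum g₁ ((2 * K + 1) * (1 / δ)) := by
    have h := hasSum_sum_of_ne_finset_zero (f := g₁) (s := Finset.Icc (-K) K)
      (L := SummationFilter.unconditional ℤ)
      (fun n hn => if_neg hn)
    convert h using 1
    rw [Finset.sum_congr rfl (fun n hn => (if_pos hn : g₁ n = 1 / δ)), Finset.sum_const,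
      Int.card_Icc, nsmul_eq_mul]
    congr 1
    have : ((K + 1 - -K).toNat : ℤ) = 2 * K + 1 := by omega
    exact_mod_cast this.symm
  have hs₂ : HasSum g₂ (Real.pi ^ 2 / 6 + Real.pi ^ 2 / 6 - g₂ 0) := by
    apply HasSum.of_nat_of_neg
    · simpa [g₂] using hasSum_zeta_two
    · simpa [g₂] using hasSum_zeta_two
  have hs := hs₁.add hs₂
  have hbs : Summable b := Summable.of_nonneg_of_le hb0 hbg hs.summable
  have hbt : ∑' n, b n ≤ 18 / δ * N := by
    have h := hasSum_le hbg hbs.hasSum hs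
    have hg0 : g₂ 0 = 0 := by simp [g₂]
    have hpi : Real.pi ^ 2 ≤ 16 := by nlinarith [Real.pi_le_four, Real.pi_pos]
    have hd : 1 ≤ 1 / δ := by rw [le_div_iff₀ hδ0]; linarith
    have e : 18 / δ * N = 18 * N * (1 / δ) := by ring
    rw [e]
    have : (2 * (K : ℝ) + 1) * (1 / δ) ≤ (3 * N) * (1 / δ) := by gcongr; linarith
    nlinarith
  have hfun : (fun n : ℤ => (1 - Real.exp (-δ * lnZ c σ n))⁻¹) = fun n => 1 + b n := by
    funext n
    have h1 := hex n
    have h2 : Real.exp (δ * lnZ c σ n) - 1 ≠ 0 := by linarith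
    have h3 := (Real.exp_pos (δ * lnZ c σ n)).ne'
    simp only [b]
    rw [neg_mul, Real.exp_neg]
    have h4 : 1 - (Real.exp (δ * lnZ c σ n))⁻¹
        = (Real.exp (δ * lnZ c σ n) - 1) / Real.exp (δ * lnZ c σ n) := by field_simp
    rw [h4, inv_div]
    field_simp
    ring
  rw [hfun]
  have hm : Multipliable (fun n => 1 + b n) := Real.multipliable_one_add_of_summable hbs
  refine ⟨hm, le_of_tendsto' hm.hasProd fun s => ?_⟩
  calc ∏ n ∈ s, (1 + b n) ≤ ∏ n ∈ s, Real.exp (b n) := by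
        refine Finset.prod_le_prod (fun n _ => by linarith [hb0 n]) fun n _ => ?_
        linarith [Real.add_one_le_exp (b n)]
    _ = Real.exp (∑ n ∈ s, b n) := (Real.exp_sum s b).symm
    _ ≤ _ := Real.exp_le_exp.2 ((hbs.sum_le_tsum s fun n _ => hb0 n).trans hbt)
end

section
/- Let σ > 2, δ ∈ (0,1), p ∈ {1, 2}, and let a : ℤ → ℕ be finitely supported. Then Π_{n∈ℤ} (1 + a_n^p)·exp(−2δ·a_n·ln^σ⌊n⌋) ≤ exp( 3p·(p/δ)^{1/(σ−1)}·exp( (1/δ)^{1/σ} ) ). -/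
lemma aux_l (σ c : ℝ) (hσ : 2 < σ) (hc : Real.exp 1 ≤ c)
    (h : Real.log (c + c) ^ σ ≤ Real.log c ^ σ + (1 / 2) * Real.log c ^ σ) :
    σ ≤ Real.log c := by
  have hc0 : 0 < c := lt_of_lt_of_le (Real.exp_pos 1) hc
  have hl : 1 ≤ Real.log c := (Real.le_log_iff_exp_le hc0).2 hc
  have hl0 : 0 < Real.log c := by linarith
  have h2 := Real.log_two_gt_d9
  have e : Real.log (c + c) = Real.log c * (1 + Real.log 2 / Real.log c) := by
    rw [← two_mul, Real.log_mul (by norm_num) hc0.ne']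
    field_simp
    ring
  have hpos : 0 < Real.log 2 / Real.log c := by positivity
  rw [e, Real.mul_rpow hl0.le (by linarith)] at h
  have hp : 0 < Real.log c ^ σ := Real.rpow_pos_of_pos hl0 σ
  have hb := one_add_mul_self_le_rpow_one_add (s := Real.log 2 / Real.log c) (by linarith)
    (p := σ) (by linarith)
  have h3 : (1 + Real.log 2 / Real.log c) ^ σ ≤ 3 / 2 := by
    by_contra hh
    push Not at hh
    nlinarith
  have h4 : σ * (Real.log 2 / Real.log c) ≤ 1 / 2 := by linarith
  rw [← mul_div_assoc, div_le_iff₀ hl0] at h4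
  nlinarith

lemma aux_big (p k : ℕ) (hp : p = 1 ∨ p = 2) (s : ℝ) (hs : 1 ≤ s) :
    (1 + (k : ℝ) ^ p) * Real.exp (-(s * k)) ≤ 1 := by
  have hk : (0 : ℝ) ≤ k := Nat.cast_nonneg k
  have h1 : 1 + (k : ℝ) ^ p ≤ Real.exp k := by
    rcases hp with rfl | rfl
    · have := Real.add_one_le_exp (k : ℝ)
      simp only [pow_one]; linarith
    · have := Real.sum_le_exp_of_nonneg hk 4
      simp [Finset.sum_range_succ, Nat.factorial] at this
      nlinarith [mul_nonneg hk (sq_nonneg ((k : ℝ) - 3 / 2))]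
  rw [Real.exp_neg, ← div_eq_mul_inv, div_le_one (Real.exp_pos _)]
  exact h1.trans (Real.exp_le_exp.2 (by nlinarith))

lemma aux_small (p k : ℕ) (hp : p = 1 ∨ p = 2) (s : ℝ) (hs0 : 0 < s) (hs : s < 1) :
    (1 + (k : ℝ) ^ p) * Real.exp (-(s * k)) ≤ Real.exp (p * Real.log (1 / s) + 1) := by
  have hk : (0 : ℝ) ≤ k := Nat.cast_nonneg k
  have hpp : (1 : ℝ) ≤ p := by rcases hp with rfl | rfl <;> norm_num
  have h1 : 1 + (k : ℝ) ^ p ≤ (1 + k) ^ p := by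
    rcases hp with rfl | rfl
    · simp
    · nlinarith
  have h2 : (1 + (k : ℝ)) ^ p = Real.exp (p * Real.log (1 + k)) := by
    rw [mul_comm, Real.exp_mul, Real.exp_log (by linarith), Real.rpow_natCast]
  have h3 : Real.log (1 + k) + Real.log s - Real.log p ≤ (1 + k) * s / p - 1 := by
    have := Real.log_le_sub_one_of_pos (x := (1 + k) * s / p) (by positivity)
    rwa [Real.log_div (by positivity) (by positivity),
      Real.log_mul (by positivity) (by positivity)] at this
  have h4 : (p : ℝ) * (Real.log (1 + k) + Real.log s - Real.log p) ≤ (1 + k) * s - p := by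
    calc _ ≤ (p : ℝ) * ((1 + k) * s / p - 1) := by gcongr
      _ = _ := by field_simp
  have h5 : (p : ℝ) * Real.log p ≤ p := by
    rcases hp with rfl | rfl
    · simp
    · have := Real.log_two_lt_d9
      push_cast; linarith
  calc _ ≤ Real.exp (p * Real.log (1 + k)) * Real.exp (-(s * k)) := by
        rw [← h2]; gcongr
    _ = Real.exp (p * Real.log (1 + k) + -(s * k)) := (Real.exp_add _ _).symm
    _ ≤ _ := by
      apply Real.exp_le_exp.2
      rw [one_div, Real.log_inv]
      nlinarith


/-- Lemma 5.8 of the paper. For `σ > 2`, `δ ∈ (0,1)`, `p ∈ {1,2}` and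
finitely supported `a : ℤ → ℕ`,
`∏_{n∈ℤ} (1 + aₙᵖ)·exp(−2δ·aₙ·ln^σ⌊n⌋) ≤ exp(3p·(p/δ)^{1/(σ−1)}·exp((1/δ)^{1/σ}))`.
(All factors with `aₙ = 0` equal `1`, so the product is taken over the support of `a`.) -/
theorem full_dim_KAM_stmt10 (σ δ : ℝ) (hσ : 2 < σ) (hδ : δ ∈ Set.Ioo (0 : ℝ) 1)
    (c : ℝ) (hc : Real.exp 1 ≤ c)
    (hsub : ∀ x y : ℝ, c ≤ y → y ≤ x →
      Real.log (x + y) ^ σ ≤ Real.log x ^ σ + (1 / 2) * Real.log y ^ σ)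
    (p : ℕ) (hp : p = 1 ∨ p = 2) (a : ℤ →₀ ℕ) :
    ∏ n ∈ a.support, (1 + (a n : ℝ) ^ p) * Real.exp (-(2 * δ) * (a n : ℝ) * lnZ c σ n)
      ≤ Real.exp (3 * p * ((p : ℝ) / δ) ^ (1 / (σ - 1)) * Real.exp ((1 / δ) ^ (1 / σ))) := by

  obtain ⟨hδ0, hδ1⟩ := hδ
  have hl := aux_l σ c hσ hc (hsub c c le_rfl le_rfl)
  have hc0 : 0 < c := lt_of_lt_of_le (Real.exp_pos 1) hc
  have hσ0 : 0 < σ := by linarith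
  have hpp : (1 : ℝ) ≤ p := by rcases hp with rfl | rfl <;> norm_num
  set U : ℝ := (1 / δ) ^ (1 / σ) with hU
  set V : ℝ := ((p : ℝ) / δ) ^ (1 / (σ - 1)) with hV
  have hinv : 1 ≤ 1 / δ := by rw [le_div_iff₀ hδ0]; linarith
  have hU0 : 0 < U := Real.rpow_pos_of_pos (by positivity) _
  have hV0 : 0 < V := Real.rpow_pos_of_pos (by positivity) _
  have hUV : U ≤ V := by
    calc U ≤ (1 / δ) ^ (1 / (σ - 1)) := by
          apply Real.rpow_le_rpow_of_exponent_le hinv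
          exact one_div_le_one_div_of_le (by linarith) (by linarith)
      _ ≤ V := by
          apply Real.rpow_le_rpow (by positivity) (by gcongr)
          have : 0 < σ - 1 := by linarith
          positivity
  have hUσ : U ^ σ = 1 / δ := by
    rw [hU, ← Real.rpow_mul (by positivity), one_div_mul_cancel hσ0.ne', Real.rpow_one]
  have hln : ∀ n : ℤ, σ ≤ Real.log (max c |(n : ℝ)|) := fun n =>
    hl.trans (Real.log_le_log hc0 (le_max_left _ _))
  have hL0 : ∀ n : ℤ, 0 < lnZ c σ n := fun n =>
    Real.rpow_pos_of_pos (by linarith [hln n]) _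
  have hs0 : ∀ n : ℤ, 0 < 2 * δ * lnZ c σ n := fun n => by have := hL0 n; positivity
  have harg : ∀ n : ℤ, -(2 * δ) * (a n : ℝ) * lnZ c σ n = -(2 * δ * lnZ c σ n * (a n : ℕ)) :=
    fun n => by ring
  have key : ∀ n ∈ a.support,
      (1 + (a n : ℝ) ^ p) * Real.exp (-(2 * δ) * (a n : ℝ) * lnZ c σ n)
        ≤ if 2 * δ * lnZ c σ n < 1 then Real.exp (p * V) else 1 := by
    intro n _
    rw [harg]
    split_ifs with h
    · refine (aux_small p (a n) hp _ (hs0 n) h).trans (Real.exp_le_exp.2 ?_)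
      have hlp : 0 < Real.log (max c |(n : ℝ)|) := by linarith [hln n]
      have e1 : Real.log (1 / (2 * δ * lnZ c σ n)) ≤ U - 2 := by
        have e2 : 1 / (2 * δ * lnZ c σ n) ≤ (U / Real.log (max c |(n : ℝ)|)) ^ σ := by
          rw [Real.div_rpow hU0.le hlp.le, hUσ, div_div]
          have := hL0 n
          apply one_div_le_one_div_of_le
          · exact mul_pos hδ0 this
          · change δ * lnZ c σ n ≤ _
            nlinarith
        have e3 := Real.log_le_log (one_div_pos.2 (hs0 n)) e2
        rw [Real.log_rpow (by positivity)] at e3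
        have e4 := Real.log_le_sub_one_of_pos (x := U / Real.log (max c |(n : ℝ)|))
          (by positivity)
        have e5 : σ * (U / Real.log (max c |(n : ℝ)|)) ≤ U := by
          rw [← mul_div_assoc, div_le_iff₀ hlp, mul_comm]
          exact mul_le_mul_of_nonneg_left (hln n) hU0.le
        have e6 := mul_le_mul_of_nonneg_left e4 hσ0.le
        linarith
      nlinarith
    · exact aux_big p (a n) hp _ (not_lt.1 h)
  have hprod := Finset.prod_le_prod (s := a.support)
    (fun n _ => by positivity) key
  refine hprod.trans ?_
  rw [← Finset.prod_filter, Finset.prod_const, ← Real.exp_nat_mul]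
  apply Real.exp_le_exp.2
  have hcard : ((a.support.filter (fun n => 2 * δ * lnZ c σ n < 1)).card : ℝ)
      ≤ 3 * Real.exp U := by
    have hsubs : a.support.filter (fun n => 2 * δ * lnZ c σ n < 1)
        ⊆ Finset.Icc (-⌊Real.exp U⌋) ⌊Real.exp U⌋ := by
      intro n hn
      have h := (Finset.mem_filter.1 hn).2
      have h1 : Real.log (max c |(n : ℝ)|) ^ σ < U ^ σ := by
        rw [hUσ, lt_div_iff₀ hδ0]
        change lnZ c σ n * δ < 1
        nlinarith [hL0 n]
      have h2 := (Real.rpow_lt_rpow_iff (by linarith [hln n]) hU0.le hσ0).1 h1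
      have h3 : max c |(n : ℝ)| < Real.exp U :=
        (Real.log_lt_iff_lt_exp (lt_of_lt_of_le hc0 (le_max_left _ _))).1 h2
      have h4 : |(n : ℝ)| ≤ Real.exp U := (le_max_right _ _).trans h3.le
      have h5 : |n| ≤ ⌊Real.exp U⌋ := Int.le_floor.2 (by push_cast; exact h4)
      rw [Finset.mem_Icc]
      exact abs_le.1 h5
    have h6 := Finset.card_le_card hsubs
    rw [Int.card_Icc] at h6
    have h7 : (0 : ℤ) ≤ ⌊Real.exp U⌋ := Int.floor_nonneg.2 (Real.exp_pos _).le
    have h8 : ((a.support.filter (fun n => 2 * δ * lnZ c σ n < 1)).card : ℤ)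
        ≤ 2 * ⌊Real.exp U⌋ + 1 := by omega
    have h9 : ((a.support.filter (fun n => 2 * δ * lnZ c σ n < 1)).card : ℝ)
        ≤ 2 * (⌊Real.exp U⌋ : ℝ) + 1 := by exact_mod_cast h8
    have h10 := Int.floor_le (Real.exp U)
    have h11 := Real.add_one_le_exp U
    linarith
  calc _ ≤ 3 * Real.exp U * (p * V) := by
        apply mul_le_mul_of_nonneg_right hcard (by positivity)
    _ = _ := by ring
end

section
/- Let σ > 2. There exists B₀ > 0 (depending only on σ) such that for every real B ≥ B₀ and every finitely supported l : ℤ → ℤ with Σ_{n∈ℤ} |l_n|·ln^σ⌊n⌋ ≤ B, one has Π_{n∈ℤ} (1 + l_n²·⟨n⟩⁴)^{−1} ≥ exp( −100·B·(ln B)^{1−σ} ). -/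
/-- `⟨n⟩ = max{1, |n|}` for an integer `n`, as a real number. -/
def bra (n : ℤ) : ℝ := max 1 |(n : ℝ)|

theorem full_dim_KAM_stmt12 (σ : ℝ) (hσ : 2 < σ) (c : ℝ) (hc : Real.exp 1 ≤ c)
    (hsub : ∀ x y : ℝ, c ≤ y → y ≤ x →
      Real.log (x + y) ^ σ ≤ Real.log x ^ σ + (1 / 2) * Real.log y ^ σ) :
    ∃ B₀ : ℝ, 0 < B₀ ∧ ∀ B : ℝ, B₀ ≤ B → ∀ l : ℤ →₀ ℤ,
      (∑ n ∈ l.support, (|l n| : ℝ) * lnZ c σ n) ≤ B →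
      ∏ n ∈ l.support, (1 + (l n : ℝ) ^ 2 * bra n ^ 4)⁻¹
        ≥ Real.exp (-(100 * B * Real.log B ^ (1 - σ))) := by
  clear hsub
  obtain ⟨θ, hθ0, hθ1, hθ⟩ : ∃ θ : ℝ, 0 < θ ∧ θ < 1 ∧ θ ^ (1 - σ) ≤ 2 := by
    refine ⟨(2:ℝ) ^ (1 / (1 - σ)), by positivity, ?_, ?_⟩
    · apply Real.rpow_lt_one_of_one_lt_of_neg (by norm_num)
      apply div_neg_of_pos_of_neg <;> linarith
    · rw [← Real.rpow_mul (by norm_num), one_div, inv_mul_cancel₀ (by linarith), Real.rpow_one]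
  have hlo := (isLittleO_log_rpow_rpow_atTop σ (show 0 < 1 - θ by linarith)).bound
    (show (0:ℝ) < 1 / 21 by norm_num)
  obtain ⟨B1, hB1⟩ := Filter.eventually_atTop.1 hlo
  refine ⟨max B1 (Real.exp 1), by positivity, ?_⟩
  intro B hB l hl
  have hBe : Real.exp 1 ≤ B := le_trans (le_max_right _ _) hB
  have hB2 : (2:ℝ) ≤ B := by linarith [Real.add_one_le_exp (1:ℝ)]
  have hB0 : 0 < B := by linarith
  have hL : 1 ≤ Real.log B := by
    rw [Real.le_log_iff_exp_le hB0]; exact hBe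
  have hbd := hB1 B (le_trans (le_max_left _ _) hB)
  set L := Real.log B with hLdef
  have hL0 : 0 < L := by linarith
  rw [Real.norm_of_nonneg (by positivity), Real.norm_of_nonneg (by positivity)] at hbd
  set N := B ^ θ with hN
  have hN1 : 1 ≤ N := Real.one_le_rpow (by linarith) hθ0.le
  have hNB : N ≤ B := by
    calc N ≤ B ^ (1:ℝ) := Real.rpow_le_rpow_of_exponent_le (by linarith) hθ1.le
      _ = B := Real.rpow_one B
  have hsmall : 3 * N * (7 * L) ≤ B * L ^ (1 - σ) := by
    have e1 : N * B ^ (1 - θ) = B := by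
      rw [hN, ← Real.rpow_add hB0]; simp
    have e2 : L ^ σ * L ^ (1 - σ) = L := by
      rw [← Real.rpow_add hL0]; simp
    have hp : 0 < L ^ (1 - σ) := by positivity
    calc 3 * N * (7 * L) = 21 * N * (L ^ σ * L ^ (1 - σ)) := by rw [e2]; ring
      _ ≤ 21 * N * ((1 / 21 * B ^ (1 - θ)) * L ^ (1 - σ)) := by gcongr
      _ = (N * B ^ (1 - θ)) * L ^ (1 - σ) := by ring
      _ = _ := by rw [e1]
  have hlogm : ∀ n : ℤ, 1 ≤ Real.log (max c |(n : ℝ)|) := by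
    intro n
    rw [Real.le_log_iff_exp_le (lt_of_lt_of_le (Real.exp_pos 1) (le_trans hc (le_max_left _ _)))]
    exact le_trans hc (le_max_left _ _)
  have hw : ∀ n : ℤ, 1 ≤ lnZ c σ n := fun n => Real.one_le_rpow (hlogm n) (by linarith)
  have hl1 : ∀ n ∈ l.support, (1:ℝ) ≤ |(l n : ℝ)| := by
    intro n hn
    have := Int.one_le_abs (Finsupp.mem_support_iff.1 hn)
    exact_mod_cast this
  have hbra : ∀ n, 1 ≤ bra n := fun n => le_max_left _ _
  -- the elementary bound on one factor
  have hf : ∀ n ∈ l.support, Real.log (1 + (l n : ℝ) ^ 2 * bra n ^ 4)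
      ≤ 1 + 2 * Real.log |(l n : ℝ)| + 4 * Real.log (bra n) := by
    intro n hn
    have h1 := hl1 n hn
    have h2 := hbra n
    have h3 : (1:ℝ) ≤ |(l n : ℝ)| ^ 2 * bra n ^ 4 :=
      one_le_mul_of_one_le_of_one_le (one_le_pow₀ h1) (one_le_pow₀ h2)
    rw [← sq_abs]
    calc Real.log (1 + |(l n : ℝ)| ^ 2 * bra n ^ 4)
        ≤ Real.log (2 * (|(l n : ℝ)| ^ 2 * bra n ^ 4)) :=
          Real.log_le_log (by positivity) (by linarith)
      _ = Real.log 2 + (2 * Real.log |(l n : ℝ)| + 4 * Real.log (bra n)) := by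
          rw [Real.log_mul (by norm_num) (by positivity),
            Real.log_mul (by positivity) (by positivity), Real.log_pow, Real.log_pow]
          norm_num
      _ ≤ _ := by linarith [Real.log_two_lt_d9]
  have hterm : ∀ n ∈ l.support, Real.log (1 + (l n : ℝ) ^ 2 * bra n ^ 4)
      ≤ 10 * L ^ (1 - σ) * (|(l n : ℝ)| * lnZ c σ n) + (if |(n:ℝ)| ≤ N then 7 * L else 0) := by
    intro n hn
    have h1 := hl1 n hn
    have h2 := hbra n
    have h0 := hf n hn
    have hwn := hw n
    have hp : 0 < L ^ (1 - σ) := by positivity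
    split_ifs with hnN
    · have hlB : |(l n : ℝ)| ≤ B := by
        calc |(l n : ℝ)| ≤ |(l n : ℝ)| * lnZ c σ n := le_mul_of_one_le_right (by positivity) hwn
          _ ≤ ∑ n ∈ l.support, |(l n : ℝ)| * lnZ c σ n :=
            Finset.single_le_sum (f := fun n => |(l n : ℝ)| * lnZ c σ n)
              (fun i _ => mul_nonneg (abs_nonneg _) (by linarith [hw i])) hn
          _ ≤ B := hl
      have a1 : Real.log |(l n : ℝ)| ≤ L := Real.log_le_log (by linarith) hlB
      have a2 : Real.log (bra n) ≤ L :=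
        Real.log_le_log (by linarith) (max_le (by linarith) (by linarith))
      have : 0 ≤ 10 * L ^ (1 - σ) * (|(l n : ℝ)| * lnZ c σ n) := by positivity
      linarith
    · push Not at hnN
      set M := Real.log (max c |(n : ℝ)|) with hM
      have hM1 : 1 ≤ M := hlogm n
      have a1 : Real.log |(l n : ℝ)| ≤ |(l n : ℝ)| - 1 := Real.log_le_sub_one_of_pos (by linarith)
      have a2 : Real.log (bra n) ≤ M := by
        apply Real.log_le_log (by linarith)
        apply max_le_max _ le_rfl
        linarith [Real.add_one_le_exp (1:ℝ)]
      have a3 : θ * L ≤ M := by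
        rw [hLdef, ← Real.log_rpow hB0]
        exact Real.log_le_log (by positivity) (le_trans hnN.le (le_max_right _ _))
      have a4 : M ≤ lnZ c σ n * (2 * L ^ (1 - σ)) := by
        have hM0 : 0 < M := by linarith
        calc M = M ^ σ * M ^ (1 - σ) := by rw [← Real.rpow_add hM0]; simp
          _ ≤ M ^ σ * (θ * L) ^ (1 - σ) := by
            gcongr ?_ * ?_
            exact Real.rpow_le_rpow_of_nonpos (by positivity) a3 (by linarith)
          _ = M ^ σ * (θ ^ (1 - σ) * L ^ (1 - σ)) := by rw [Real.mul_rpow hθ0.le hL0.le]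
          _ ≤ M ^ σ * (2 * L ^ (1 - σ)) := by gcongr
          _ = _ := rfl
      have a5 : 1 + 2 * Real.log |(l n : ℝ)| + 4 * Real.log (bra n) ≤ 5 * (|(l n : ℝ)| * M) := by
        nlinarith [mul_nonneg (sub_nonneg.2 h1) (sub_nonneg.2 hM1)]
      have a6 : |(l n : ℝ)| * M ≤ |(l n : ℝ)| * (lnZ c σ n * (2 * L ^ (1 - σ))) := by gcongr
      linarith
  have hcard : ∑ n ∈ l.support, (if |(n:ℝ)| ≤ N then 7 * L else 0) ≤ 3 * N * (7 * L) := by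
    rw [← Finset.sum_filter, Finset.sum_const, nsmul_eq_mul]
    gcongr
    have hs : l.support.filter (fun n : ℤ => |(n:ℝ)| ≤ N) ⊆ Finset.Icc (-⌊N⌋) ⌊N⌋ := by
      intro n hn
      have hn := (Finset.mem_filter.1 hn).2
      rw [Finset.mem_Icc, ← abs_le, Int.le_floor]
      push_cast
      exact hn
    have h1 := Finset.card_le_card hs
    rw [Int.card_Icc] at h1
    have hfl : 0 ≤ ⌊N⌋ := Int.floor_nonneg.2 (by linarith)
    have h2 : ((l.support.filter (fun n : ℤ => |(n:ℝ)| ≤ N)).card : ℤ) ≤ 2 * ⌊N⌋ + 1 := by omega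
    have h3 : ((l.support.filter (fun n : ℤ => |(n:ℝ)| ≤ N)).card : ℝ) ≤ 2 * (⌊N⌋ : ℝ) + 1 := by
      exact_mod_cast h2
    linarith [Int.floor_le N]
  have htot : ∑ n ∈ l.support, Real.log (1 + (l n : ℝ) ^ 2 * bra n ^ 4)
      ≤ 100 * B * L ^ (1 - σ) := by
    have hp : 0 < L ^ (1 - σ) := by positivity
    have h1 := Finset.sum_le_sum hterm
    rw [Finset.sum_add_distrib, ← Finset.mul_sum] at h1
    have h2 := mul_le_mul_of_nonneg_left hl (show 0 ≤ 10 * L ^ (1 - σ) by positivity)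
    have h3 : 0 < B * L ^ (1 - σ) := by positivity
    linarith
  have hpos : ∀ n, 0 < 1 + (l n : ℝ) ^ 2 * bra n ^ 4 := by
    intro n
    have := hbra n
    positivity
  calc ∏ n ∈ l.support, (1 + (l n : ℝ) ^ 2 * bra n ^ 4)⁻¹
      = Real.exp (-∑ n ∈ l.support, Real.log (1 + (l n : ℝ) ^ 2 * bra n ^ 4)) := by
        rw [← Finset.sum_neg_distrib, Real.exp_sum]
        apply Finset.prod_congr rfl
        intro n _
        rw [Real.exp_neg, Real.exp_log (hpos n)]
    _ ≥ _ := Real.exp_le_exp.2 (by linarith)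
end

section
/- Let σ > 2 and δ ∈ (0,1). Then for every finitely supported l : ℤ → ℤ, one has Π_{n∈ℤ} (1 + l_n²·⟨n⟩⁴) ≤ exp( (1000/δ)·exp( 4·(50/δ)^{1/(σ−1)} ) ) · exp( δ·Σ_{n∈ℤ} |l_n|·ln^σ⌊n⌋ ). -/
lemma aux_log_term (k m : ℝ) (hk : 1 ≤ k) (hm : 1 ≤ m) :
    Real.log (1 + k ^ 2 * m ^ 4) ≤ 1 + 2 * Real.log k + 4 * Real.log m := by
  have h1 : 1 ≤ k ^ 2 * m ^ 4 := by
    have := one_le_pow₀ hk (n := 2)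
    have := one_le_pow₀ hm (n := 4)
    nlinarith
  have h2 : Real.log (1 + k ^ 2 * m ^ 4) ≤ Real.log (2 * (k ^ 2 * m ^ 4)) :=
    Real.log_le_log (by linarith) (by linarith)
  have h3 : Real.log (2 * (k ^ 2 * m ^ 4)) = Real.log 2 + (2 * Real.log k + 4 * Real.log m) := by
    rw [Real.log_mul (by norm_num) (by positivity), Real.log_mul (by positivity) (by positivity),
      Real.log_pow, Real.log_pow]
    norm_num
  have h4 := Real.log_le_sub_one_of_pos (show (0 : ℝ) < 2 by norm_num)
  linarith

lemma aux_log_delta (k δ : ℝ) (hk : 1 ≤ k) (hδ : 0 < δ) :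
    2 * Real.log k ≤ δ * k + 4 / δ - 4 := by
  have h1 := Real.log_le_sub_one_of_pos (show 0 < δ * k / 2 by positivity)
  have h2 := Real.log_le_sub_one_of_pos (show 0 < 2 / δ by positivity)
  have h3 : Real.log k = Real.log (δ * k / 2) + Real.log (2 / δ) := by
    rw [← Real.log_mul (by positivity) (by positivity)]
    congr 1
    field_simp
  have h4 : 4 / δ = 2 * (2 / δ) := by ring
  linarith

lemma aux_term (σ δ A c k x : ℝ) (hσ : 2 < σ) (hδ : 0 < δ) (hc : Real.exp 1 ≤ c)
    (hA : A = (50 / δ) ^ (1 / (σ - 1))) (hA0 : 1 ≤ A) (hk : 1 ≤ k) (hx : 0 ≤ x) :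
    Real.log (1 + k ^ 2 * (max 1 x) ^ 4) ≤ δ * (k * Real.log (max c x) ^ σ) +
      if x < Real.exp A then 4 * A + 4 / δ else 0 := by
  have hc1 : 1 ≤ c := le_trans (Real.one_le_exp (by norm_num)) hc
  have h1 := aux_log_term k (max 1 x) hk (le_max_left _ _)
  have hL1 : 1 ≤ Real.log (max c x) := by
    rw [Real.le_log_iff_exp_le (by positivity)]
    exact hc.trans (le_max_left _ _)
  set L := Real.log (max c x) with hL
  split_ifs with h
  · have h2 := aux_log_delta k δ hk hδ
    have h3 : Real.log (max 1 x) ≤ A := by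
      rw [Real.log_le_iff_le_exp (by positivity)]
      exact max_le (Real.one_le_exp (by linarith)) h.le
    have h4 : 1 ≤ L ^ σ := Real.one_le_rpow hL1 (by linarith)
    have h5 : δ * k ≤ δ * (k * L ^ σ) := by
      gcongr
      nlinarith
    linarith
  · push Not at h
    have hAL : A ≤ L := by
      rw [hL, Real.le_log_iff_exp_le (by positivity)]
      exact h.trans (le_max_right _ _)
    have h3 : Real.log (max 1 x) ≤ L :=
      Real.log_le_log (by positivity) (max_le_max hc1 le_rfl)
    have h4 : 50 / δ ≤ L ^ (σ - 1) := by
      have : (50 / δ) = A ^ (σ - 1) := by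
        rw [hA, ← Real.rpow_mul (by positivity), one_div_mul_cancel (by linarith), Real.rpow_one]
      rw [this]
      exact Real.rpow_le_rpow (by linarith) hAL (by linarith)
    have h5 : L ^ σ = L ^ (σ - 1) * L := by
      rw [← Real.rpow_add_one (by linarith)]
      congr 1
      ring
    have h6 : 50 ≤ δ * L ^ (σ - 1) := by
      rw [div_le_iff₀ hδ] at h4
      linarith
    have h7 : 50 * (k * L) ≤ δ * (k * L ^ σ) := by
      rw [h5]
      have : 0 ≤ k * L := by positivity
      nlinarith
    have h8 := Real.log_le_sub_one_of_pos (show 0 < k by linarith)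
    nlinarith

/-- key analytic estimate in the proof of Lemma 3.2 of the paper.
For every finitely supported `l : ℤ → ℤ`,
`∏ₙ (1 + lₙ²·⟨n⟩⁴) ≤ exp((1000/δ)·exp(4·(50/δ)^{1/(σ−1)})) · exp(δ·∑ₙ |lₙ|·ln^σ⌊n⌋)`.
(All factors with `lₙ = 0` equal `1`, so the product is taken over the support of `l`.) -/
theorem full_dim_KAM_stmt13 (σ δ : ℝ) (hσ : 2 < σ) (hδ : δ ∈ Set.Ioo (0 : ℝ) 1)
    (c : ℝ) (hc : Real.exp 1 ≤ c)
    (hsub : ∀ x y : ℝ, c ≤ y → y ≤ x →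
      Real.log (x + y) ^ σ ≤ Real.log x ^ σ + (1 / 2) * Real.log y ^ σ)
    (l : ℤ →₀ ℤ) :
    ∏ n ∈ l.support, (1 + (l n : ℝ) ^ 2 * bra n ^ 4)
      ≤ Real.exp ((1000 / δ) * Real.exp (4 * (50 / δ) ^ (1 / (σ - 1)))) *
        Real.exp (δ * ∑ n ∈ l.support, (|l n| : ℝ) * lnZ c σ n) := by
  obtain ⟨hδ0, hδ1⟩ := hδ
  set A : ℝ := (50 / δ) ^ (1 / (σ - 1)) with hA
  have hA0 : 1 ≤ A := by
    apply Real.one_le_rpow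
    · rw [le_div_iff₀ hδ0]
      linarith
    · apply one_div_nonneg.mpr
      linarith
  have hB : 0 ≤ 4 * A + 4 / δ := by positivity
  have hterm : ∀ n ∈ l.support, 1 + (l n : ℝ) ^ 2 * bra n ^ 4 ≤
      Real.exp (δ * (|(l n : ℝ)| * lnZ c σ n) +
        if |(n : ℝ)| < Real.exp A then 4 * A + 4 / δ else 0) := by
    intro n hn
    have hk : (1 : ℝ) ≤ |(l n : ℝ)| := by
      have : l n ≠ 0 := by simpa using hn
      exact_mod_cast Int.one_le_abs this
    have h := aux_term σ δ A c |(l n : ℝ)| |(n : ℝ)| hσ hδ0 hc hA hA0 hk (abs_nonneg _)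
    rw [sq_abs, Real.log_le_iff_le_exp (by positivity)] at h
    exact h
  have hpos : ∀ n ∈ l.support, 0 ≤ 1 + (l n : ℝ) ^ 2 * bra n ^ 4 := by
    intro n _
    positivity
  refine (Finset.prod_le_prod hpos hterm).trans ?_
  rw [← Real.exp_sum, ← Real.exp_add, Finset.sum_add_distrib, ← Finset.mul_sum, add_comm]
  gcongr
  rw [← Finset.sum_filter]
  have hsubset : l.support.filter (fun n : ℤ => |(n : ℝ)| < Real.exp A) ⊆
      Finset.Icc (-(⌊Real.exp A⌋)) ⌊Real.exp A⌋ := by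
    intro n hn
    have h := (Finset.mem_filter.mp hn).2
    rw [Finset.mem_Icc, ← abs_le, Int.le_floor]
    push_cast
    exact h.le
  have hcard : ((l.support.filter (fun n : ℤ => |(n : ℝ)| < Real.exp A)).card : ℝ) ≤
      3 * Real.exp A := by
    have h1 := Finset.card_le_card hsubset
    rw [Int.card_Icc] at h1
    have h0 : 0 ≤ ⌊Real.exp A⌋ := Int.floor_nonneg.mpr (Real.exp_pos A).le
    have h2 : ((l.support.filter (fun n : ℤ => |(n : ℝ)| < Real.exp A)).card : ℤ) ≤
        2 * ⌊Real.exp A⌋ + 1 := by omega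
    have h3 : ((l.support.filter (fun n : ℤ => |(n : ℝ)| < Real.exp A)).card : ℝ) ≤
        2 * (⌊Real.exp A⌋ : ℝ) + 1 := by exact_mod_cast h2
    have h4 := Int.floor_le (Real.exp A)
    have h5 := Real.add_one_le_exp A
    linarith
  rw [Finset.sum_const, nsmul_eq_mul]
  have hE := Real.add_one_le_exp A
  have hE1 : 1 ≤ Real.exp A := by linarith
  have hbound : 4 * A + 4 / δ ≤ 4 / δ * Real.exp A := by
    have h1 : 4 ≤ 4 / δ := by
      rw [le_div_iff₀ hδ0]
      linarith
    nlinarith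
  have h4 : Real.exp (4 * A) = Real.exp A ^ 4 := by
    rw [← Real.exp_nat_mul]
    norm_num
  rw [h4]
  calc _ ≤ (3 * Real.exp A) * (4 / δ * Real.exp A) := by gcongr
    _ = 12 / δ * Real.exp A ^ 2 := by ring
    _ ≤ 1000 / δ * Real.exp A ^ 4 := by
      gcongr
      · norm_num
      · norm_num
end

section
/- Let σ > 2, r ∈ (0,1), and 0 < ρ ≤ r/2. Let (I_n)_{n∈ℤ} be real numbers with 0 ≤ I_n ≤ exp(−2r·ln^σ⌊n⌋) for all n. Then the sum, over all finitely supported a : ℤ → ℕ, of Π_{n∈ℤ} ( exp(2ρ·ln^σ⌊n⌋)·I_n )^{a_n} is at most exp( (18/r)·exp( (4/r)^{1/(σ−1)} ) ). -/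
lemma aux_prod (x : ℤ → ℝ) (r B : ℝ) (hr : 0 < r) (hx : ∀ n, 0 ≤ x n) (hx1 : ∀ n, x n ≤ 1 - r / 2)
    (hB : ∀ T : Finset ℤ, ∑ n ∈ T, x n ≤ B) (S : Finset (ℤ →₀ ℕ)) :
    ∑ a ∈ S, ∏ n ∈ a.support, x n ^ a n ≤ Real.exp ((2 / r) * B) := by
  classical
  set T : Finset ℤ := S.biUnion (fun a => a.support) with hT
  set N : ℕ := (S.sup fun a => T.sup fun n => a n) + 1 with hN
  have hsub : ∀ a ∈ S, a.support ⊆ T := fun a ha => Finset.subset_biUnion_of_mem (fun a : ℤ →₀ ℕ => a.support) ha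
  have hlt : ∀ a ∈ S, ∀ n ∈ T, a n < N := by
    intro a ha n hn
    have h1 : a n ≤ T.sup fun n => a n := Finset.le_sup (f := fun n => a n) hn
    have h2 := Finset.le_sup (f := fun a : ℤ →₀ ℕ => T.sup fun n => a n) ha
    have h3 : (T.sup fun n => a n) ≤ S.sup fun a : ℤ →₀ ℕ => T.sup fun n => a n := h2
    omega
  have h1 : ∑ a ∈ S, ∏ n ∈ a.support, x n ^ a n
      ≤ ∏ n ∈ T, ∑ k ∈ Finset.range N, x n ^ k := by
    rw [Finset.prod_sum]
    have hinj : Set.InjOn (fun (a : ℤ →₀ ℕ) => (fun (n : ℤ) (_ : n ∈ T) => a n)) (S : Set (ℤ →₀ ℕ)) := by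
      intro a ha b hb hab
      ext n
      by_cases hn : n ∈ T
      · exact congrFun (congrFun hab n) hn
      · have ha' := fun h => hn (hsub a ha h)
        have hb' := fun h => hn (hsub b hb h)
        rw [Finsupp.notMem_support_iff.mp ha', Finsupp.notMem_support_iff.mp hb']
    calc ∑ a ∈ S, ∏ n ∈ a.support, x n ^ a n
        = ∑ a ∈ S, ∏ n ∈ T.attach, x n.1 ^ a n.1 := by
          refine Finset.sum_congr rfl fun a ha => ?_
          rw [Finset.prod_attach T (fun n => x n ^ a n)]
          refine Finset.prod_subset (hsub a ha) fun n _ hn => ?_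
          rw [Finsupp.notMem_support_iff.mp hn, pow_zero]
      _ = ∑ p ∈ S.image (fun (a : ℤ →₀ ℕ) => (fun (n : ℤ) (_ : n ∈ T) => a n)),
            ∏ n ∈ T.attach, x n.1 ^ p n.1 n.2 := by
          rw [Finset.sum_image hinj]
      _ ≤ _ := by
          refine Finset.sum_le_sum_of_subset_of_nonneg ?_ ?_
          · intro p hp
            obtain ⟨a, ha, rfl⟩ := Finset.mem_image.mp hp
            rw [Finset.mem_pi]
            intro n hn
            exact Finset.mem_range.mpr (hlt a ha n hn)
          · intro p _ _
            exact Finset.prod_nonneg fun n _ => pow_nonneg (hx _) _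
  have h2 : ∀ n, ∑ k ∈ Finset.range N, x n ^ k ≤ Real.exp ((2 / r) * x n) := by
    intro n
    have hp : 0 < 1 - x n := by linarith [hx1 n]
    have e1 : (∑ k ∈ Finset.range N, x n ^ k) * (1 - x n) = 1 - x n ^ N := geom_sum_mul_neg _ _
    have e2 : ∑ k ∈ Finset.range N, x n ^ k ≤ 1 / (1 - x n) := by
      rw [le_div_iff₀ hp, e1]
      linarith [pow_nonneg (hx n) N]
    have e3 : 1 / (1 - x n) ≤ (2 / r) * x n + 1 := by
      rw [div_le_iff₀ hp]
      have : (2 / r) * (1 - x n) ≥ 1 := by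
        rw [ge_iff_le, div_mul_eq_mul_div, le_div_iff₀ hr]
        linarith [hx1 n]
      nlinarith [hx n]
    exact e2.trans (e3.trans (Real.add_one_le_exp _))
  calc _ ≤ _ := h1
    _ ≤ ∏ n ∈ T, Real.exp ((2 / r) * x n) :=
        Finset.prod_le_prod (fun n _ => Finset.sum_nonneg fun k _ => pow_nonneg (hx n) k) fun n _ => h2 n
    _ = Real.exp ((2 / r) * ∑ n ∈ T, x n) := by rw [← Real.exp_sum, Finset.mul_sum]
    _ ≤ _ := Real.exp_le_exp.mpr (mul_le_mul_of_nonneg_left (hB T) (by positivity))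

lemma aux_zeta (T : Finset ℤ) : ∑ n ∈ T, 1 / (n : ℝ) ^ 2 ≤ 4 := by
  have h := hasSum_zeta_two
  have h2 : HasSum (fun n : ℤ => 1 / (n : ℝ) ^ 2) (Real.pi ^ 2 / 6 + Real.pi ^ 2 / 6 - 1 / ((0 : ℤ) : ℝ) ^ 2) := by
    apply HasSum.of_nat_of_neg
    · simpa using h
    · simpa using h
  have h3 := sum_le_hasSum T (fun n _ => by positivity) h2
  refine h3.trans ?_
  have := Real.pi_lt_d2
  have := Real.pi_pos
  norm_num
  nlinarith

lemma aux_sum (x : ℤ → ℝ) (M : ℝ) (hM : 1 ≤ M) (hx1 : ∀ n, x n ≤ 1)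
    (hx2 : ∀ n : ℤ, M ≤ |(n : ℝ)| → x n ≤ 1 / (n : ℝ) ^ 2) (T : Finset ℤ) :
    ∑ n ∈ T, x n ≤ 9 * M := by
  classical
  rw [← Finset.sum_filter_add_sum_filter_not T (fun n : ℤ => M ≤ |(n : ℝ)|)]
  have h1 : ∑ n ∈ T with M ≤ |((n : ℤ) : ℝ)|, x n ≤ 4 :=
    (Finset.sum_le_sum fun n hn => hx2 n (Finset.mem_filter.mp hn).2).trans (aux_zeta _)
  have h2 : ∑ n ∈ T with ¬ M ≤ |((n : ℤ) : ℝ)|, x n ≤ 2 * M + 1 := by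
    refine (Finset.sum_le_card_nsmul _ _ 1 fun n _ => hx1 n).trans ?_
    have hs : (T.filter fun n : ℤ => ¬ M ≤ |(n : ℝ)|) ⊆ Finset.Icc (-⌊M⌋) ⌊M⌋ := by
      intro n hn
      have hn := (Finset.mem_filter.mp hn).2
      rw [not_le, abs_lt] at hn
      rw [Finset.mem_Icc]
      constructor
      · have : -n ≤ ⌊M⌋ := Int.le_floor.mpr (by push_cast; linarith)
        omega
      · exact Int.le_floor.mpr hn.2.le
    have hc := Finset.card_le_card hs
    rw [Int.card_Icc] at hc
    have hf : 0 ≤ ⌊M⌋ := Int.floor_nonneg.mpr (by linarith)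
    have hc2 : ((T.filter fun n : ℤ => ¬ M ≤ |(n : ℝ)|).card : ℤ) ≤ 2 * ⌊M⌋ + 1 := by omega
    have hc3 : ((T.filter fun n : ℤ => ¬ M ≤ |(n : ℝ)|).card : ℝ) ≤ 2 * (⌊M⌋ : ℝ) + 1 := by
      exact_mod_cast hc2
    have := Int.floor_le M
    rw [nsmul_eq_mul, mul_one]
    linarith
  linarith

/-- the frequency-shift bound (114) in the iterative Lemma 4.1 of the paper.
If `0 ≤ Iₙ ≤ exp(−2r·ln^σ⌊n⌋)` for all `n`, `0 < ρ ≤ r/2` and `r ∈ (0,1)`, then the sum over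
all finitely supported `a : ℤ → ℕ` of `∏ₙ (exp(2ρ·ln^σ⌊n⌋)·Iₙ)^{aₙ}` converges and is at most
`exp((18/r)·exp((4/r)^{1/(σ−1)}))`. -/
theorem full_dim_KAM_stmt14 (σ r ρ : ℝ) (hσ : 2 < σ) (hr : r ∈ Set.Ioo (0 : ℝ) 1)
    (hρ : 0 < ρ) (hρr : ρ ≤ r / 2)
    (c : ℝ) (hc : Real.exp 1 ≤ c)
    (hsub : ∀ x y : ℝ, c ≤ y → y ≤ x →
      Real.log (x + y) ^ σ ≤ Real.log x ^ σ + (1 / 2) * Real.log y ^ σ)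
    (I : ℤ → ℝ) (hI : ∀ n, 0 ≤ I n ∧ I n ≤ Real.exp (-(2 * r) * lnZ c σ n)) :
    Summable (fun a : ℤ →₀ ℕ =>
        ∏ n ∈ a.support, (Real.exp (2 * ρ * lnZ c σ n) * I n) ^ (a n)) ∧
    ∑' a : ℤ →₀ ℕ, ∏ n ∈ a.support, (Real.exp (2 * ρ * lnZ c σ n) * I n) ^ (a n)
      ≤ Real.exp ((18 / r) * Real.exp ((4 / r) ^ (1 / (σ - 1)))) := by
  obtain ⟨hr0, hr1⟩ := hr
  set A : ℝ := (4 / r) ^ (1 / (σ - 1)) with hA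
  have hA0 : 0 < A := by positivity
  set x : ℤ → ℝ := fun n => Real.exp (2 * ρ * lnZ c σ n) * I n with hx
  have hx0 : ∀ n, 0 ≤ x n := fun n => mul_nonneg (Real.exp_pos _).le (hI n).1
  have hlog : ∀ n : ℤ, 1 ≤ Real.log (max c |(n : ℝ)|) := by
    intro n
    rw [Real.le_log_iff_exp_le (lt_of_lt_of_le (Real.exp_pos 1) (hc.trans (le_max_left _ _)))]
    exact hc.trans (le_max_left _ _)
  have hL : ∀ n, 1 ≤ lnZ c σ n := fun n => Real.one_le_rpow (hlog n) (by linarith)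
  have hxe : ∀ n, x n ≤ Real.exp (-(r * lnZ c σ n)) := by
    intro n
    calc x n ≤ Real.exp (2 * ρ * lnZ c σ n) * Real.exp (-(2 * r) * lnZ c σ n) :=
          mul_le_mul_of_nonneg_left (hI n).2 (Real.exp_pos _).le
      _ = Real.exp (2 * ρ * lnZ c σ n + -(2 * r) * lnZ c σ n) := (Real.exp_add _ _).symm
      _ ≤ _ := by
        apply Real.exp_le_exp.mpr
        nlinarith [hL n]
  have hx1 : ∀ n, x n ≤ 1 - r / 2 := by
    intro n
    have h1 : x n ≤ Real.exp (-r) := (hxe n).trans (Real.exp_le_exp.mpr (by nlinarith [hL n]))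
    have h2 : Real.exp (-r) ≤ 1 / (1 + r) := by
      rw [Real.exp_neg, ← one_div]
      exact one_div_le_one_div_of_le (by linarith) (by linarith [Real.add_one_le_exp r])
    have h3 : 1 / (1 + r) ≤ 1 - r / 2 := by
      rw [div_le_iff₀ (by linarith)]
      nlinarith
    linarith
  have hx2 : ∀ n : ℤ, Real.exp A ≤ |(n : ℝ)| → x n ≤ 1 / (n : ℝ) ^ 2 := by
    intro n hn
    have hn0 : 0 < |(n : ℝ)| := (Real.exp_pos A).trans_le hn
    have hmx : |(n : ℝ)| ≤ max c |(n : ℝ)| := le_max_right _ _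
    set l := Real.log (max c |(n : ℝ)|) with hl
    have hl1 : 1 ≤ l := hlog n
    have hll : Real.log |(n : ℝ)| ≤ l := Real.log_le_log hn0 hmx
    have hAl : A ≤ l := ((Real.le_log_iff_exp_le hn0).mpr hn).trans hll
    have h4 : 4 / r ≤ l ^ (σ - 1) := by
      calc 4 / r = A ^ (σ - 1) := by
            rw [hA, ← Real.rpow_mul (by positivity), one_div_mul_cancel (by linarith), Real.rpow_one]
        _ ≤ _ := Real.rpow_le_rpow hA0.le hAl (by linarith)
    have h5 : lnZ c σ n = l ^ (σ - 1) * l := by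
      unfold lnZ
      rw [← hl]
      nth_rewrite 3 [← Real.rpow_one l]
      rw [← Real.rpow_add (by linarith)]
      congr 1
      ring
    have h6 : 4 * l ≤ r * lnZ c σ n := by
      rw [h5, ← mul_assoc]
      apply mul_le_mul_of_nonneg_right _ (by linarith)
      rw [div_le_iff₀ hr0] at h4
      linarith
    calc x n ≤ Real.exp (-(r * lnZ c σ n)) := hxe n
      _ ≤ Real.exp (-(2 * Real.log |(n : ℝ)|)) := Real.exp_le_exp.mpr (by linarith)
      _ = 1 / (n : ℝ) ^ 2 := by
        rw [Real.exp_neg, ← one_div, two_mul, Real.exp_add, Real.exp_log hn0, ← sq, sq_abs]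
  have hB := aux_sum x (Real.exp A) (Real.one_le_exp hA0.le) (fun n => by linarith [hx1 n]) hx2
  have hmain := aux_prod x r _ hr0 hx0 hx1 hB
  have heq : (2 / r) * (9 * Real.exp A) = (18 / r) * Real.exp A := by ring
  rw [heq] at hmain
  have hnn : ∀ a : ℤ →₀ ℕ, 0 ≤ ∏ n ∈ a.support, x n ^ a n :=
    fun a => Finset.prod_nonneg fun n _ => pow_nonneg (hx0 n) _
  exact ⟨summable_of_sum_le hnn hmain, Real.tsum_le_of_sum_le hnn hmain⟩
end

section
/- Let σ > 2 and let μ > r > 5ρ > 0. Then there exists a constant C = C(r, ρ, μ, σ) > 0 such that for every j ∈ ℤ the following holds: the sum, over all finitely supported a, k, k' : ℤ → ℕ with k_j ≥ 1, of k_j · exp( ρ·( Σ_{n∈ℤ}(2a_n + k_n + k'_n)·ln^σ⌊n⌋ − 2·ln^σ⌊n₁*⌋ ) − μ·ln^σ⌊m*(k,k')⌋ − r·( Σ_{n∈ℤ}(2a_n + k_n + k'_n)·ln^σ⌊n⌋ − 2·ln^σ⌊j⌋ ) ) is at most C, where n₁* denotes the largest element of the finite multiset in which each |n| (n ∈ ℤ)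 is repeated 2a_n + k_n + k'_n times. -/
/-- `∑ₙ (2aₙ + kₙ + k'ₙ)·ln^σ⌊n⌋`. -/
noncomputable def bigSum (c σ : ℝ) (a k k' : ℤ →₀ ℕ) : ℝ :=
  ∑ n ∈ a.support ∪ k.support ∪ k'.support, ((2 * a n + k n + k' n : ℕ) : ℝ) * lnZ c σ n

/-- The summand of Lemma 2.4 of the paper:
`kⱼ·exp( ρ·(∑ₙ(2aₙ+kₙ+k'ₙ)ln^σ⌊n⌋ − 2ln^σ⌊n₁*⌋) − μ·ln^σ⌊m*(k,k')⌋
        − r·(∑ₙ(2aₙ+kₙ+k'ₙ)ln^σ⌊n⌋ − 2ln^σ⌊j⌋) )`. -/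
noncomputable def vectorFieldTerm (c σ ρ μ r : ℝ) (j : ℤ)
    (t : (ℤ →₀ ℕ) × (ℤ →₀ ℕ) × (ℤ →₀ ℕ)) : ℝ :=
  (t.2.1 j : ℝ) *
    Real.exp (ρ * (bigSum c σ t.1 t.2.1 t.2.2
          - 2 * lnN c σ (descList (reps t.1 t.2.1 t.2.2)).headI)
      - μ * lnN c σ (momentum t.2.1 t.2.2).natAbs
      - r * (bigSum c σ t.1 t.2.1 t.2.2 - 2 * lnZ c σ j))


noncomputable def GG (c σ s : ℝ) : ℝ := Real.log (max c s) ^ σ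

lemma lnZ_eq_GG (c σ : ℝ) (n : ℤ) : lnZ c σ n = GG c σ |(n : ℝ)| := rfl
lemma lnN_eq_GG (c σ : ℝ) (n : ℤ) : lnN c σ n.natAbs = GG c σ |(n : ℝ)| := by
  unfold lnN GG
  rw [Nat.cast_natAbs]; simp

lemma GG_one_le {c σ : ℝ} (hσ : 2 < σ) (hc : Real.exp 1 ≤ c) (s : ℝ) : 1 ≤ GG c σ s := by
  unfold GG
  apply Real.one_le_rpow _ (by linarith)
  rw [Real.le_log_iff_exp_le (lt_of_lt_of_le (Real.exp_pos 1) (hc.trans (le_max_left _ _)))]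
  exact hc.trans (le_max_left _ _)

lemma GG_mono {c σ : ℝ} (hσ : 2 < σ) (hc : Real.exp 1 ≤ c) {s t : ℝ} (h : s ≤ t) :
    GG c σ s ≤ GG c σ t := by
  unfold GG
  have hp : 0 < max c s := lt_of_lt_of_le (Real.exp_pos 1) (hc.trans (le_max_left _ _))
  apply Real.rpow_le_rpow _ _ (by linarith)
  · apply Real.log_nonneg
    have := Real.add_one_le_exp (1:ℝ)
    have := le_max_left c s
    linarith
  · exact Real.log_le_log hp (max_le_max le_rfl h)

lemma GG_add {c σ : ℝ} (hσ : 2 < σ) (hc : Real.exp 1 ≤ c)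
    (hsub : ∀ x y : ℝ, c ≤ y → y ≤ x →
      Real.log (x + y) ^ σ ≤ Real.log x ^ σ + (1 / 2) * Real.log y ^ σ)
    {x y : ℝ} (hy : 0 ≤ y) (hxy : y ≤ x) :
    GG c σ (x + y) ≤ GG c σ x + (1 / 2) * GG c σ y := by
  have h := hsub (max c x) (max c y) (le_max_left _ _) (max_le_max le_rfl hxy)
  have h0 : 0 < c := lt_of_lt_of_le (Real.exp_pos 1) hc
  have h1 : GG c σ (x + y) ≤ GG c σ (max c x + max c y) :=
    GG_mono hσ hc (add_le_add (le_max_right _ _) (le_max_right _ _))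
  have h2 : GG c σ (max c x + max c y) = Real.log (max c x + max c y) ^ σ := by
    unfold GG
    rw [max_eq_right (a := c)]
    have := le_max_left c x
    have := le_max_left c y
    linarith
  rw [h2] at h1
  exact h1.trans h

noncomputable def Aw (c σ : ℝ) (v : ℤ →₀ ℕ) : ℝ := v.sum fun n m => (m : ℝ) * lnZ c σ n
noncomputable def Bw (v : ℤ →₀ ℕ) : ℝ := v.sum fun n m => (m : ℝ) * |(n : ℝ)|
noncomputable def Bz (v : ℤ →₀ ℕ) : ℤ := v.sum fun n m => (m : ℤ) * n

lemma Aw_add (c σ : ℝ) (u v : ℤ →₀ ℕ) : Aw c σ (u + v) = Aw c σ u + Aw c σ v := by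
  unfold Aw
  exact Finsupp.sum_add_index' (by simp) (by intros; push_cast; ring)
lemma Bw_add (u v : ℤ →₀ ℕ) : Bw (u + v) = Bw u + Bw v := by
  unfold Bw
  exact Finsupp.sum_add_index' (by simp) (by intros; push_cast; ring)
lemma Bz_add (u v : ℤ →₀ ℕ) : Bz (u + v) = Bz u + Bz v := by
  unfold Bz
  exact Finsupp.sum_add_index' (by simp) (by intros; push_cast; ring)
lemma Aw_single (c σ : ℝ) (n : ℤ) (m : ℕ) : Aw c σ (Finsupp.single n m) = m * lnZ c σ n := by
  unfold Aw; exact Finsupp.sum_single_index (by simp)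
lemma Bw_single (n : ℤ) (m : ℕ) : Bw (Finsupp.single n m) = m * |(n : ℝ)| := by
  unfold Bw; exact Finsupp.sum_single_index (by simp)
lemma Bz_single (n : ℤ) (m : ℕ) : Bz (Finsupp.single n m) = m * n := by
  unfold Bz; exact Finsupp.sum_single_index (by simp)
lemma Aw_zero (c σ : ℝ) : Aw c σ 0 = 0 := Finsupp.sum_zero_index
lemma Bw_zero : Bw 0 = 0 := Finsupp.sum_zero_index
lemma Bz_zero : Bz 0 = 0 := Finsupp.sum_zero_index
lemma Bw_nonneg (v : ℤ →₀ ℕ) : 0 ≤ Bw v :=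
  Finset.sum_nonneg (fun _ _ => by positivity)
lemma Aw_nonneg {c σ : ℝ} (hσ : 2 < σ) (hc : Real.exp 1 ≤ c) (v : ℤ →₀ ℕ) : 0 ≤ Aw c σ v :=
  Finset.sum_nonneg (fun n _ => mul_nonneg (by positivity)
    (by have := GG_one_le hσ hc |(n:ℝ)|; rw [lnZ_eq_GG]; linarith))
lemma Aw_ge {c σ : ℝ} (hσ : 2 < σ) (hc : Real.exp 1 ≤ c) (v : ℤ →₀ ℕ) (j : ℤ) :
    (v j : ℝ) ≤ Aw c σ v := by
  have e : v = Finsupp.single j (v j) + v.erase j := (Finsupp.single_add_erase j v).symm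
  have h1 : Aw c σ v = (v j : ℝ) * lnZ c σ j + Aw c σ (v.erase j) := by
    conv_lhs => rw [e]
    rw [Aw_add, Aw_single]
  have h2 := Aw_nonneg hσ hc (v.erase j)
  have h3 := GG_one_le hσ hc |(j:ℝ)|
  rw [← lnZ_eq_GG] at h3
  have h4 : (0:ℝ) ≤ v j := by positivity
  nlinarith
lemma Bz_abs_le (v : ℤ →₀ ℕ) : |((Bz v : ℤ) : ℝ)| ≤ Bw v := by
  unfold Bz Bw Finsupp.sum
  push_cast
  refine (Finset.abs_sum_le_sum_abs _ _).trans (Finset.sum_le_sum fun n _ => ?_)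
  rw [abs_mul]; simp

lemma bigSum_eq (c σ : ℝ) (a k k' : ℤ →₀ ℕ) :
    bigSum c σ a k k' = 2 * Aw c σ a + Aw c σ k + Aw c σ k' := by
  unfold bigSum Aw
  rw [Finsupp.sum_of_support_subset a (s := a.support ∪ k.support ∪ k'.support)
      (by intro x; simp only [Finset.mem_union]; tauto) _ (by simp),
    Finsupp.sum_of_support_subset k (s := a.support ∪ k.support ∪ k'.support)
      (by intro x; simp only [Finset.mem_union]; tauto) _ (by simp),
    Finsupp.sum_of_support_subset k' (s := a.support ∪ k.support ∪ k'.support)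
      (by intro x; simp only [Finset.mem_union]; tauto) _ (by simp),
    Finset.mul_sum, ← Finset.sum_add_distrib, ← Finset.sum_add_distrib]
  refine Finset.sum_congr rfl fun n _ => ?_
  push_cast; ring

lemma momentum_eq (k k' : ℤ →₀ ℕ) : momentum k k' = Bz k - Bz k' := by
  unfold momentum Bz
  rw [Finsupp.sum_of_support_subset k (s := k.support ∪ k'.support)
      (by intro x; simp only [Finset.mem_union]; tauto) _ (by simp),
    Finsupp.sum_of_support_subset k' (s := k.support ∪ k'.support)
      (by intro x; simp only [Finset.mem_union]; tauto) _ (by simp),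
    ← Finset.sum_sub_distrib]
  refine Finset.sum_congr rfl fun n _ => ?_
  ring

lemma le_headI_descList (M : Multiset ℕ) {x : ℕ} (hx : x ∈ M) : x ≤ (descList M).headI := by
  have h1 : x ∈ descList M := by unfold descList; simpa using hx
  have h2 : (descList M).Pairwise (fun a b => b ≤ a) := by
    unfold descList
    rw [List.pairwise_reverse]
    exact M.pairwise_sort (· ≤ ·)
  cases h : descList M with
  | nil => rw [h] at h1; simp at h1
  | cons y l =>
    rw [h] at h1 h2
    rcases List.mem_cons.1 h1 with rfl | h3
    · exact le_rfl
    · exact (List.pairwise_cons.1 h2).1 x h3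

lemma head_ge (a k k' : ℤ →₀ ℕ) (j : ℤ) (hj : 1 ≤ k j) :
    j.natAbs ≤ (descList (reps a k k')).headI := by
  apply le_headI_descList
  unfold reps
  rw [Multiset.mem_bind]
  refine ⟨j, ?_, ?_⟩
  · simp only [Finset.mem_val, Finset.mem_union, Finsupp.mem_support_iff]
    left; right; omega
  · rw [Multiset.mem_replicate]
    exact ⟨by omega, rfl⟩

lemma GG_many {c σ : ℝ} (hσ : 2 < σ) (hc : Real.exp 1 ≤ c)
    (hsub : ∀ x y : ℝ, c ≤ y → y ≤ x →
      Real.log (x + y) ^ σ ≤ Real.log x ^ σ + (1 / 2) * Real.log y ^ σ)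
    (b : ℝ) (u : ℤ →₀ ℕ) : (∀ n, u n ≠ 0 → |(n : ℝ)| ≤ b) → ∀ y, b ≤ y →
    GG c σ (y + Bw u) ≤ GG c σ y + (1 / 2) * Aw c σ u := by
  induction u using Finsupp.induction_linear with
  | zero => intro _ y _; simp [Aw_zero, Bw_zero]
  | add f g hf hg =>
    intro h y hy
    have h1 := hf (fun n hn => h n (by simp; omega)) y hy
    have h2 := hg (fun n hn => h n (by simp; omega)) (y + Bw f)
      (by have := Bw_nonneg f; linarith)
    rw [Aw_add, Bw_add, ← add_assoc]
    linarith
  | single n v =>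
    intro h y hy
    induction v with
    | zero => simp [Aw_zero, Bw_zero]
    | succ v ih =>
      have hb : |(n : ℝ)| ≤ b := h n (by simp)
      have h1 : GG c σ (y + Bw (Finsupp.single n v)) ≤
          GG c σ y + (1 / 2) * Aw c σ (Finsupp.single n v) := by
        apply ih
        intro m hm
        apply h m
        rw [Finsupp.single_apply] at hm ⊢
        split_ifs at hm ⊢ <;> simp_all
      have h2 := GG_add hσ hc hsub (x := y + Bw (Finsupp.single n v)) (abs_nonneg (n:ℝ))
        (by have := Bw_nonneg (Finsupp.single n v); linarith)
      rw [Aw_single, Bw_single] at *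
      rw [lnZ_eq_GG] at *
      push_cast
      rw [show y + ((v:ℝ) + 1) * |(n:ℝ)| = y + v * |(n:ℝ)| + |(n:ℝ)| by ring]
      linarith

/-- The key inequality. -/
lemma key_ineq {c σ : ℝ} (hσ : 2 < σ) (hc : Real.exp 1 ≤ c)
    (hsub : ∀ x y : ℝ, c ≤ y → y ≤ x →
      Real.log (x + y) ^ σ ≤ Real.log x ^ σ + (1 / 2) * Real.log y ^ σ)
    (v : ℤ →₀ ℕ) (x : ℤ) (hx : v x ≠ 0) (hmax : ∀ n, v n ≠ 0 → |(n : ℝ)| ≤ |(x : ℝ)|)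
    (j m : ℝ) (hm : 0 ≤ m) (hjm : j ≤ m + Bw v) :
    GG c σ j ≤ (1 / 2) * Aw c σ v + (1 / 2) * lnZ c σ x + GG c σ m := by
  have h0 := GG_mono hσ hc hjm
  have hP := GG_one_le hσ hc |(x:ℝ)|
  have hM := GG_one_le hσ hc m
  rw [lnZ_eq_GG]
  rcases le_total |(x:ℝ)| m with h | h
  · have := GG_many hσ hc hsub |(x:ℝ)| v hmax m h
    linarith
  · obtain ⟨u, hu⟩ : ∃ u, v = u + Finsupp.single x 1 := by
      refine ⟨v - Finsupp.single x 1, ?_⟩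
      ext n
      simp only [Finsupp.add_apply, Finsupp.tsub_apply, Finsupp.single_apply]
      split_ifs with hh
      · subst hh; omega
      · omega
    have h1 := GG_many hσ hc hsub |(x:ℝ)| u
      (fun n hn => hmax n (by rw [hu]; simp; omega)) (|(x:ℝ)| + m) (by linarith)
    have h2 := GG_add hσ hc hsub hm h
    have h3 : Aw c σ v = Aw c σ u + GG c σ |(x:ℝ)| := by
      rw [hu, Aw_add, Aw_single, lnZ_eq_GG]; simp
    have h4 : m + Bw v = |(x:ℝ)| + m + Bw u := by
      rw [hu, Bw_add, Bw_single]; push_cast; ring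
    rw [h4] at h0
    linarith

lemma tsum_le_of_exists {α β : Type*} (f : α → ENNReal) (g : β → ENNReal) (ψ : β → α)
    (h : ∀ t, ∃ y, ψ y = t ∧ f t ≤ g y) : ∑' t, f t ≤ ∑' y, g y := by
  choose φ h1 h2 using h
  have hinj : Function.Injective φ := fun x y hxy => by rw [← h1 x, ← h1 y, hxy]
  exact (ENNReal.tsum_le_tsum h2).trans (ENNReal.tsum_comp_le_tsum_of_injective hinj g)

/-- Summability of the one-site weights. -/
lemma one_site {c σ : ℝ} (hσ : 2 < σ) (hc : Real.exp 1 ≤ c) {δ : ℝ} (hδ : 0 < δ) :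
    Summable (fun n : ℤ => Real.exp (-(δ * lnZ c σ n))) := by
  have hs : Summable (fun n : ℤ => Real.exp (1 / δ) * (1 / (n:ℝ) ^ 2)) :=
    (Real.summable_one_div_int_pow.2 (by norm_num)).mul_left _
  refine Summable.of_norm_bounded_eventually hs ?_
  have : ∀ᶠ n : ℤ in Filter.cofinite, n ≠ 0 := by
    rw [Filter.eventually_cofinite]; simp
  filter_upwards [this] with n hn
  rw [Real.norm_eq_abs, abs_of_pos (Real.exp_pos _)]
  have hn' : 0 < |(n:ℝ)| := by positivity
  set X := max c |(n:ℝ)| with hX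
  have hXn : |(n:ℝ)| ≤ X := le_max_right _ _
  have hX0 : 0 < X := hn'.trans_le hXn
  have hy : 1 ≤ Real.log X := by
    rw [Real.le_log_iff_exp_le hX0]; exact hc.trans (le_max_left _ _)
  have h1 : Real.log X ^ 2 ≤ lnZ c σ n := by
    unfold lnZ
    rw [← hX, ← Real.rpow_natCast]
    exact Real.rpow_le_rpow_of_exponent_le hy (by push_cast; linarith)
  have h2 : 2 * Real.log X ≤ δ * Real.log X ^ 2 + 1 / δ := by
    have : 0 ≤ (δ * Real.log X - 1) ^ 2 / δ := by positivity
    have e : (δ * Real.log X - 1) ^ 2 / δ = δ * Real.log X ^ 2 - 2 * Real.log X + 1 / δ := by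
      field_simp; ring
    linarith
  have h3 : -(δ * lnZ c σ n) ≤ 1 / δ + -(2 * Real.log X) := by
    have := mul_le_mul_of_nonneg_left h1 hδ.le
    linarith
  calc Real.exp (-(δ * lnZ c σ n)) ≤ Real.exp (1 / δ + -(2 * Real.log X)) := Real.exp_le_exp.2 h3
    _ = Real.exp (1 / δ) * (1 / X ^ 2) := by
      rw [Real.exp_add, Real.exp_neg, show 2 * Real.log X = Real.log X + Real.log X by ring,
        Real.exp_add, Real.exp_log hX0]
      congr 1; field_simp
    _ ≤ _ := by
      have : (n:ℝ)^2 ≤ X^2 := by rw [← sq_abs]; gcongr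
      have h4 : 0 < (n:ℝ)^2 := by positivity
      gcongr


noncomputable def ww (c σ δ : ℝ) (a : ℤ →₀ ℕ) : ENNReal :=
  ENNReal.ofReal (Real.exp (-(δ * Aw c σ a)))

lemma geom_bound {c σ : ℝ} (hσ : 2 < σ) (hc : Real.exp 1 ≤ c) {δ : ℝ} (hδ : 0 < δ) (n : ℤ) :
    ∑' v : ℕ, ENNReal.ofReal (Real.exp (-(δ * ((v : ℝ) * lnZ c σ n)))) ≤
      ENNReal.ofReal (Real.exp ((1 - Real.exp (-δ))⁻¹ * Real.exp (-(δ * lnZ c σ n)))) := by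
  set q := Real.exp (-(δ * lnZ c σ n)) with hq
  have hL : 1 ≤ lnZ c σ n := GG_one_le hσ hc _
  have hq0 : 0 < q := Real.exp_pos _
  have hq1 : q ≤ Real.exp (-δ) := Real.exp_le_exp.2 (by nlinarith)
  have hd : Real.exp (-δ) < 1 := by rw [Real.exp_lt_one_iff]; linarith
  have e : ∀ v : ℕ, Real.exp (-(δ * ((v : ℝ) * lnZ c σ n))) = q ^ v := by
    intro v; rw [hq, ← Real.exp_nat_mul]; congr 1; ring
  simp_rw [e]
  rw [← ENNReal.ofReal_tsum_of_nonneg (fun v => by positivity)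
    (summable_geometric_of_lt_one hq0.le (by linarith)), tsum_geometric_of_lt_one hq0.le (by linarith)]
  apply ENNReal.ofReal_le_ofReal
  have h1 : (1 - q)⁻¹ = 1 + (1 - q)⁻¹ * q := by
    have : (1 - q) ≠ 0 := by linarith
    field_simp; ring
  have h2 : (1 - q)⁻¹ ≤ (1 - Real.exp (-δ))⁻¹ := by
    apply inv_anti₀ <;> linarith
  have h3 := Real.add_one_le_exp ((1 - Real.exp (-δ))⁻¹ * q)
  have h4 := mul_le_mul_of_nonneg_right h2 hq0.le
  linarith

open Classical in
lemma partial_bound {c σ : ℝ} (hσ : 2 < σ) (hc : Real.exp 1 ≤ c) {δ : ℝ} (hδ : 0 < δ)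
    (s : Finset ℤ) :
    ∑' a : ℤ →₀ ℕ, (if a.support ⊆ s then ww c σ δ a else 0) ≤
      ENNReal.ofReal (Real.exp (∑ n ∈ s,
        (1 - Real.exp (-δ))⁻¹ * Real.exp (-(δ * lnZ c σ n)))) := by
  induction s using Finset.induction_on with
  | empty =>
    rw [tsum_eq_single 0]
    · simp [ww, Aw_zero]
    · intro b hb; simp [hb]
  | insert n s hn ih =>
    rw [Finset.sum_insert hn, Real.exp_add, ENNReal.ofReal_mul (Real.exp_pos _).le]
    refine le_trans ?_ (mul_le_mul' (geom_bound hσ hc hδ n) ih)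
    rw [← ENNReal.tsum_mul_right]
    simp_rw [← ENNReal.tsum_mul_left]
    rw [← ENNReal.tsum_prod (f := fun (v : ℕ) (b : ℤ →₀ ℕ) =>
      ENNReal.ofReal (Real.exp (-(δ * ((v : ℝ) * lnZ c σ n)))) *
        (if b.support ⊆ s then ww c σ δ b else 0))]
    apply tsum_le_of_exists _ _ (fun p : ℕ × (ℤ →₀ ℕ) => Finsupp.single n p.1 + p.2)
    intro a
    refine ⟨(a n, a.erase n), Finsupp.single_add_erase n a, ?_⟩
    dsimp only
    by_cases h : a.support ⊆ insert n s
    · have h' : (a.erase n).support ⊆ s := by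
        intro y hy
        rw [Finsupp.support_erase, Finset.mem_erase] at hy
        rcases Finset.mem_insert.1 (h hy.2) with h3 | h3
        · exact absurd h3 hy.1
        · exact h3
      rw [if_pos h, if_pos h']
      unfold ww
      rw [← ENNReal.ofReal_mul (Real.exp_pos _).le, ← Real.exp_add]
      apply le_of_eq
      congr 2
      conv_lhs => rw [← Finsupp.single_add_erase n a, Aw_add, Aw_single]
      ring
    · rw [if_neg h]; exact zero_le

open Classical in
lemma Z_finite {c σ : ℝ} (hσ : 2 < σ) (hc : Real.exp 1 ≤ c) {δ : ℝ} (hδ : 0 < δ) :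
    ∑' a : ℤ →₀ ℕ, ww c σ δ a < ⊤ := by
  have hd : Real.exp (-δ) < 1 := by rw [Real.exp_lt_one_iff]; linarith
  have hs := (one_site hσ hc hδ).mul_left (1 - Real.exp (-δ))⁻¹
  refine lt_of_le_of_lt (b := ENNReal.ofReal (Real.exp (∑' n : ℤ,
    (1 - Real.exp (-δ))⁻¹ * Real.exp (-(δ * lnZ c σ n))))) ?_ ENNReal.ofReal_lt_top
  rw [ENNReal.tsum_eq_iSup_sum]
  refine iSup_le fun F => ?_
  have h := partial_bound hσ hc hδ (F.biUnion Finsupp.support)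
  refine le_trans (le_trans ?_ h) ?_
  · refine le_trans ?_ (ENNReal.sum_le_tsum F)
    refine Finset.sum_le_sum fun a ha => ?_
    rw [if_pos (Finset.subset_biUnion_of_mem Finsupp.support ha)]
  · apply ENNReal.ofReal_le_ofReal
    apply Real.exp_le_exp.2
    refine hs.sum_le_tsum _ (fun n _ => ?_)
    have : 0 < 1 - Real.exp (-δ) := by linarith
    positivity

abbrev TT := (ℤ →₀ ℕ) × (ℤ →₀ ℕ) × (ℤ →₀ ℕ)

noncomputable def SS (c σ : ℝ) (t : TT) : ℝ :=
  2 * Aw c σ t.1 + Aw c σ t.2.1 + Aw c σ t.2.2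

lemma SS_nonneg {c σ : ℝ} (hσ : 2 < σ) (hc : Real.exp 1 ≤ c) (t : TT) : 0 ≤ SS c σ t := by
  have h1 := Aw_nonneg hσ hc t.1
  have h2 := Aw_nonneg hσ hc t.2.1
  have h3 := Aw_nonneg hσ hc t.2.2
  unfold SS; linarith

lemma ZT_finite {c σ : ℝ} (hσ : 2 < σ) (hc : Real.exp 1 ≤ c) {δ : ℝ} (hδ : 0 < δ) :
    ∑' t : TT, ENNReal.ofReal (Real.exp (-(δ * SS c σ t))) < ⊤ := by
  have e : ∀ t : TT, ENNReal.ofReal (Real.exp (-(δ * SS c σ t))) =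
      ww c σ (2 * δ) t.1 * (ww c σ δ t.2.1 * ww c σ δ t.2.2) := by
    intro t
    unfold ww SS
    rw [← ENNReal.ofReal_mul (Real.exp_pos _).le, ← Real.exp_add,
      ← ENNReal.ofReal_mul (Real.exp_pos _).le, ← Real.exp_add]
    congr 2; ring
  simp_rw [e]
  rw [ENNReal.tsum_prod (f := fun a (p : (ℤ →₀ ℕ) × (ℤ →₀ ℕ)) =>
    ww c σ (2 * δ) a * (ww c σ δ p.1 * ww c σ δ p.2))]
  simp_rw [ENNReal.tsum_mul_left]
  rw [ENNReal.tsum_mul_right, ENNReal.tsum_prod (f := fun a b => ww c σ δ a * ww c σ δ b)]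
  simp_rw [ENNReal.tsum_mul_left]
  rw [ENNReal.tsum_mul_right]
  have h1 := Z_finite hσ hc hδ
  have h2 := Z_finite hσ hc (δ := 2 * δ) (by linarith)
  exact ENNReal.mul_lt_top h2 (ENNReal.mul_lt_top h1 h1)

/-- The momentum-type site attached to the removed largest element. -/
noncomputable def site (j : ℤ) (i : Fin 4) (t : TT) (x : ℤ) : ℤ :=
  ![x, x, j + (Bz t.2.1 - Bz t.2.2) + x, j + (Bz t.2.1 - Bz t.2.2) - x] i

noncomputable def glue (j : ℤ) (y : Fin 4 × TT × ℤ) : TT :=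
  ![(y.2.1.1, y.2.1.2.1 + Finsupp.single j 1, y.2.1.2.2),
    (y.2.1.1 + Finsupp.single y.2.2 1, y.2.1.2.1 + Finsupp.single j 1, y.2.1.2.2),
    (y.2.1.1, y.2.1.2.1 + Finsupp.single y.2.2 1 + Finsupp.single j 1, y.2.1.2.2),
    (y.2.1.1, y.2.1.2.1 + Finsupp.single j 1, y.2.1.2.2 + Finsupp.single y.2.2 1)] y.1

lemma glue_ge (j : ℤ) (y : Fin 4 × TT × ℤ) : 1 ≤ (glue j y).2.1 j := by
  obtain ⟨i, t, x⟩ := y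
  fin_cases i <;> simp [glue]

noncomputable def gg (c σ δ C : ℝ) (j : ℤ) (y : Fin 4 × TT × ℤ) : ℝ :=
  C * Real.exp (-(δ * SS c σ y.2.1)) * Real.exp (-(δ * lnZ c σ (site j y.1 y.2.1 y.2.2)))

lemma site_sum (j : ℤ) (i : Fin 4) (t : TT) (f : ℤ → ENNReal) :
    ∑' x, f (site j i t x) = ∑' x, f x := by
  fin_cases i
  · rfl
  · rfl
  · exact (Equiv.addLeft (j + (Bz t.2.1 - Bz t.2.2))).tsum_eq f
  · exact (Equiv.subLeft (j + (Bz t.2.1 - Bz t.2.2))).tsum_eq f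

lemma gg_sum (c σ δ C : ℝ) (hC : 0 ≤ C) (j : ℤ) :
    ∑' y, ENNReal.ofReal (gg c σ δ C j y) =
      4 * (ENNReal.ofReal C * (∑' t : TT, ENNReal.ofReal (Real.exp (-(δ * SS c σ t)))) *
        ∑' x : ℤ, ENNReal.ofReal (Real.exp (-(δ * lnZ c σ x)))) := by
  have e : ∀ y, ENNReal.ofReal (gg c σ δ C j y) =
      ENNReal.ofReal C * ENNReal.ofReal (Real.exp (-(δ * SS c σ y.2.1))) *
        ENNReal.ofReal (Real.exp (-(δ * lnZ c σ (site j y.1 y.2.1 y.2.2)))) := by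
    intro y
    unfold gg
    rw [ENNReal.ofReal_mul (by positivity), ENNReal.ofReal_mul hC]
  simp_rw [e]
  rw [ENNReal.tsum_prod (f := fun i (p : TT × ℤ) =>
    ENNReal.ofReal C * ENNReal.ofReal (Real.exp (-(δ * SS c σ p.1))) *
        ENNReal.ofReal (Real.exp (-(δ * lnZ c σ (site j i p.1 p.2)))))]
  have h : ∀ i : Fin 4, ∑' p : TT × ℤ,
      ENNReal.ofReal C * ENNReal.ofReal (Real.exp (-(δ * SS c σ p.1))) *
        ENNReal.ofReal (Real.exp (-(δ * lnZ c σ (site j i p.1 p.2)))) =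
      (ENNReal.ofReal C * (∑' t : TT, ENNReal.ofReal (Real.exp (-(δ * SS c σ t)))) *
        ∑' x : ℤ, ENNReal.ofReal (Real.exp (-(δ * lnZ c σ x)))) := by
    intro i
    rw [ENNReal.tsum_prod (f := fun t x =>
      ENNReal.ofReal C * ENNReal.ofReal (Real.exp (-(δ * SS c σ t))) *
        ENNReal.ofReal (Real.exp (-(δ * lnZ c σ (site j i t x)))))]
    simp_rw [ENNReal.tsum_mul_left]
    simp_rw [fun t => site_sum j i t (fun x => ENNReal.ofReal (Real.exp (-(δ * lnZ c σ x))))]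
    rw [ENNReal.tsum_mul_right, ENNReal.tsum_mul_left]
  simp_rw [h]
  rw [tsum_fintype]
  simp

lemma absorb {α δ s Q E N C : ℝ} (hα : 0 < α) (hδ : δ ≤ α / 4) (hs : 0 ≤ s)
    (hN : N ≤ 2 + s) (hE : E ≤ -(α / 2) * s - δ * Q) (hC : 2 + 4 / α ≤ C) :
    N * Real.exp E ≤ C * Real.exp (-(δ * s)) * Real.exp (-(δ * Q)) := by
  have h1 := Real.add_one_le_exp (α / 4 * s)
  have h0 : 0 ≤ α / 4 * s := by positivity
  have h2 : 2 + s ≤ C * Real.exp (α / 4 * s) := by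
    have h4 : 0 < 4 / α := by positivity
    have h3 : (2 + 4 / α) * (α / 4 * s + 1) ≤ C * Real.exp (α / 4 * s) := by
      apply mul_le_mul hC h1 (by linarith) (by linarith)
    have h5 : (4 / α) * (α / 4 * s) = s := by field_simp
    nlinarith
  have hC0 : 0 ≤ C := by have : 0 < 4 / α := by positivity
                         linarith
  calc N * Real.exp E ≤ (C * Real.exp (α / 4 * s)) * Real.exp (-(α / 2) * s - δ * Q) := by
        apply mul_le_mul (hN.trans h2) (Real.exp_le_exp.2 hE) (Real.exp_pos _).le (by positivity)
    _ = C * Real.exp (-(α / 4 * s)) * Real.exp (-(δ * Q)) := by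
        rw [mul_assoc, mul_assoc, ← Real.exp_add, ← Real.exp_add]; congr 2; ring
    _ ≤ _ := by
        have : Real.exp (-(α / 4 * s)) ≤ Real.exp (-(δ * s)) :=
          Real.exp_le_exp.2 (by nlinarith)
        gcongr

lemma split_single (a : ℤ →₀ ℕ) (x : ℤ) (hx : a x ≠ 0) :
    ∃ u, a = u + Finsupp.single x 1 := by
  refine ⟨a - Finsupp.single x 1, ?_⟩
  ext n
  simp only [Finsupp.add_apply, Finsupp.tsub_apply, Finsupp.single_apply]
  split_ifs with hh
  · subst hh; omega
  · omega

lemma term_le {c σ ρ μ r : ℝ} (hσ : 2 < σ) (hc : Real.exp 1 ≤ c) (hρ : 0 < ρ)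
    (j : ℤ) (a k k' : ℤ →₀ ℕ) :
    vectorFieldTerm c σ ρ μ r j (a, k + Finsupp.single j 1, k') ≤
      (1 + (k j : ℝ)) * Real.exp (-(r - ρ) * (SS c σ (a, k, k') - lnZ c σ j) -
        μ * lnZ c σ (j + (Bz k - Bz k'))) := by
  have hh : lnZ c σ j ≤ lnN c σ (descList (reps a (k + Finsupp.single j 1) k')).headI := by
    have := head_ge a (k + Finsupp.single j 1) k' j (by simp)
    rw [lnZ_eq_GG, ← lnN_eq_GG]
    exact GG_mono hσ hc (by exact_mod_cast this)
  unfold vectorFieldTerm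
  dsimp only
  rw [bigSum_eq, momentum_eq, lnN_eq_GG, ← lnZ_eq_GG, Aw_add, Bz_add, Aw_single, Bz_single]
  have e : Bz k + ((1:ℕ):ℤ) * j - Bz k' = j + (Bz k - Bz k') := by push_cast; ring
  rw [e]
  have e2 : (((k + Finsupp.single j 1 : ℤ →₀ ℕ) j : ℕ) : ℝ) = 1 + (k j : ℝ) := by simp; ring
  rw [e2]
  apply mul_le_mul_of_nonneg_left _ (by positivity)
  apply Real.exp_le_exp.2
  unfold SS
  dsimp only
  push_cast
  nlinarith

lemma main_exists {c σ ρ μ r δ C : ℝ} (hσ : 2 < σ) (hc : Real.exp 1 ≤ c) (hρ : 0 < ρ)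
    (hr : 0 < r - ρ) (hμ : r < μ)
    (hsub : ∀ x y : ℝ, c ≤ y → y ≤ x →
      Real.log (x + y) ^ σ ≤ Real.log x ^ σ + (1 / 2) * Real.log y ^ σ)
    (hδ0 : 0 < δ) (hδ1 : δ ≤ (r - ρ) / 4) (hδ2 : δ ≤ μ - (r - ρ))
    (hC1 : 2 + 4 / (r - ρ) ≤ C) (hC2 : Real.exp (δ * lnZ c σ 0) ≤ C)
    (j : ℤ) (a k k' : ℤ →₀ ℕ) :
    ∃ y, glue j y = (a, k + Finsupp.single j 1, k') ∧
      vectorFieldTerm c σ ρ μ r j (a, k + Finsupp.single j 1, k') ≤ gg c σ δ C j y := by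
  have hT := term_le (μ := μ) (r := r) hσ hc hρ j a k k'
  have hLnn : ∀ n, 1 ≤ lnZ c σ n := fun n => GG_one_le hσ hc _
  by_cases h0 : a + a + k + k' = 0
  · have hz : a = 0 ∧ k = 0 ∧ k' = 0 := by
      refine ⟨?_, ?_, ?_⟩ <;> ext n <;> have := DFunLike.congr_fun h0 n <;>
        simp at this ⊢ <;> omega
    obtain ⟨rfl, rfl, rfl⟩ := hz
    refine ⟨(0, (0, 0, 0), 0), by simp [glue], hT.trans ?_⟩
    simp only [gg, site, SS, Aw_zero, Bz_zero]
    simp only [Finsupp.coe_zero, Pi.zero_apply, Nat.cast_zero, add_zero, one_mul, mul_zero,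
      sub_self, zero_sub, neg_zero, Real.exp_zero, mul_one, Matrix.cons_val_zero]
    have h1 : Real.exp (-(r - ρ) * -lnZ c σ j - μ * lnZ c σ j) ≤ 1 := by
      rw [Real.exp_le_one_iff]
      have := hLnn j
      nlinarith
    have h2 : 1 = Real.exp (δ * lnZ c σ 0) * Real.exp (-(δ * lnZ c σ 0)) := by
      rw [← Real.exp_add]; simp
    refine h1.trans ?_
    rw [h2]
    gcongr
  · obtain ⟨x, hx, hmax⟩ := Finset.exists_max_image (a + a + k + k').support
      (fun n : ℤ => |(n:ℝ)|) (Finsupp.support_nonempty_iff.2 h0)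
    have hk := key_ineq hσ hc hsub (a + a + k + k') x (Finsupp.mem_support_iff.1 hx)
      (fun n hn => hmax n (Finsupp.mem_support_iff.2 hn)) |(j:ℝ)|
      |((j + (Bz k - Bz k') : ℤ) : ℝ)| (abs_nonneg _) (by
        have h1 := Bz_abs_le k
        have h2 := Bz_abs_le k'
        have h3 := Bw_nonneg a
        rw [Bw_add, Bw_add, Bw_add]
        push_cast
        have h4 : |(j:ℝ)| ≤ |(j:ℝ) + (Bz k - Bz k')| + |(Bz k:ℝ)| + |(Bz k':ℝ)| := by
          rcases abs_cases (j:ℝ) with h | h <;>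
          rcases abs_cases ((j:ℝ) + (Bz k - Bz k')) with h' | h' <;>
          rcases abs_cases (Bz k:ℝ) with h'' | h'' <;>
          rcases abs_cases (Bz k':ℝ) with h''' | h''' <;> linarith
        linarith)
    rw [← lnZ_eq_GG, ← lnZ_eq_GG, Aw_add, Aw_add, Aw_add] at hk
    have hM := hLnn (j + (Bz k - Bz k'))
    have hP := hLnn x
    have hE : -(r - ρ) * (SS c σ (a, k, k') - lnZ c σ j) - μ * lnZ c σ (j + (Bz k - Bz k')) ≤
        -((r - ρ) / 2) * (SS c σ (a, k, k') - lnZ c σ x) -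
          δ * lnZ c σ (j + (Bz k - Bz k')) := by
      have e : SS c σ (a, k, k') = Aw c σ a + Aw c σ a + Aw c σ k + Aw c σ k' := by
        unfold SS; ring
      rw [← e] at hk
      have h1 := mul_le_mul_of_nonneg_left hk hr.le
      have h2 := mul_le_mul_of_nonneg_right hδ2 (by linarith : 0 ≤ lnZ c σ (j + (Bz k - Bz k')))
      linarith
    have hx' : a x ≠ 0 ∨ k x ≠ 0 ∨ k' x ≠ 0 := by
      rw [Finsupp.mem_support_iff] at hx
      simp only [Finsupp.add_apply] at hx
      omega
    rcases hx' with h | h | h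
    · obtain ⟨u, rfl⟩ := split_single a x h
      refine ⟨(1, (u, k, k'), x), by simp [glue], hT.trans ?_⟩
      have e : SS c σ (u + Finsupp.single x 1, k, k') = SS c σ (u, k, k') + 2 * lnZ c σ x := by
        simp only [SS, Aw_add, Aw_single]; push_cast; ring
      rw [e] at hE ⊢
      have hs := SS_nonneg hσ hc (u, k, k')
      refine absorb hr hδ1 hs ?_ (hE.trans ?_) hC1
      · have h1 := Aw_ge hσ hc k j
        have h2 := Aw_nonneg hσ hc u
        have h3 := Aw_nonneg hσ hc k'
        simp only [SS]; linarith
      · simp only [site, Matrix.cons_val_one, Matrix.cons_val_zero]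
        have h1 := mul_le_mul_of_nonneg_right hδ1 (by linarith : 0 ≤ lnZ c σ x)
        nlinarith
    · obtain ⟨u, rfl⟩ := split_single k x h
      refine ⟨(2, (a, u, k'), x), by simp [glue], hT.trans ?_⟩
      have e : SS c σ (a, u + Finsupp.single x 1, k') = SS c σ (a, u, k') + lnZ c σ x := by
        simp only [SS, Aw_add, Aw_single]; push_cast; ring
      have e2 : j + (Bz (u + Finsupp.single x 1) - Bz k') = j + (Bz u - Bz k') + x := by
        rw [Bz_add, Bz_single]; push_cast; ring
      rw [e, e2] at hE ⊢
      have hs := SS_nonneg hσ hc (a, u, k')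
      refine absorb hr hδ1 hs ?_ (hE.trans ?_) hC1
      · have h1 := Aw_ge hσ hc u j
        have h2 := Aw_nonneg hσ hc a
        have h3 := Aw_nonneg hσ hc k'
        have h4 : ((Finsupp.single x 1 j : ℕ) : ℝ) ≤ 1 := by
          rw [Finsupp.single_apply]; split_ifs <;> simp
        rw [Finsupp.add_apply]
        push_cast
        simp only [SS]; linarith
      · simp only [site]
        apply le_of_eq
        simp
    · obtain ⟨u, rfl⟩ := split_single k' x h
      refine ⟨(3, (a, k, u), x), by simp [glue], hT.trans ?_⟩
      have e : SS c σ (a, k, u + Finsupp.single x 1) = SS c σ (a, k, u) + lnZ c σ x := by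
        simp only [SS, Aw_add, Aw_single]; push_cast; ring
      have e2 : j + (Bz k - Bz (u + Finsupp.single x 1)) = j + (Bz k - Bz u) - x := by
        rw [Bz_add, Bz_single]; push_cast; ring
      rw [e, e2] at hE ⊢
      have hs := SS_nonneg hσ hc (a, k, u)
      refine absorb hr hδ1 hs ?_ (hE.trans ?_) hC1
      · have h1 := Aw_ge hσ hc k j
        have h2 := Aw_nonneg hσ hc a
        have h3 := Aw_nonneg hσ hc u
        simp only [SS]; linarith
      · simp only [site]
        apply le_of_eq
        simp

/-- Lemma 2.4 of the paper: the bound on the Hamiltonian vector field.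
For `μ > r > 5ρ > 0` there is a constant `C = C(r,ρ,μ,σ) > 0` such that for every `j ∈ ℤ`
the sum over all finitely supported `a, k, k' : ℤ → ℕ` with `kⱼ ≥ 1` of the above summand
converges and is at most `C`. -/
theorem full_dim_KAM_stmt15 (σ ρ r μ : ℝ) (hσ : 2 < σ)
    (hρ : 0 < ρ) (hr : 5 * ρ < r) (hμ : r < μ)
    (c : ℝ) (hc : Real.exp 1 ≤ c)
    (hsub : ∀ x y : ℝ, c ≤ y → y ≤ x →
      Real.log (x + y) ^ σ ≤ Real.log x ^ σ + (1 / 2) * Real.log y ^ σ) :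
    ∃ C : ℝ, 0 < C ∧ ∀ j : ℤ,
      Summable (fun t : {t : (ℤ →₀ ℕ) × (ℤ →₀ ℕ) × (ℤ →₀ ℕ) // 1 ≤ t.2.1 j} =>
        vectorFieldTerm c σ ρ μ r j t.1) ∧
      ∑' t : {t : (ℤ →₀ ℕ) × (ℤ →₀ ℕ) × (ℤ →₀ ℕ) // 1 ≤ t.2.1 j},
        vectorFieldTerm c σ ρ μ r j t.1 ≤ C := by
  have hα : 0 < r - ρ := by linarith
  obtain ⟨δ, hδ0, hδ1, hδ2⟩ : ∃ δ : ℝ, 0 < δ ∧ δ ≤ (r - ρ) / 4 ∧ δ ≤ μ - (r - ρ) :=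
    ⟨min ((r - ρ) / 4) (μ - (r - ρ)), lt_min (by linarith) (by linarith),
      min_le_left _ _, min_le_right _ _⟩
  obtain ⟨C, hC1, hC2⟩ : ∃ C : ℝ, 2 + 4 / (r - ρ) ≤ C ∧ Real.exp (δ * lnZ c σ 0) ≤ C :=
    ⟨_, le_max_left _ _, le_max_right _ _⟩
  have hC0 : 0 ≤ C := (Real.exp_pos _).le.trans hC2
  set K : ENNReal := 4 * (ENNReal.ofReal C *
    (∑' t : TT, ENNReal.ofReal (Real.exp (-(δ * SS c σ t)))) *
        ∑' x : ℤ, ENNReal.ofReal (Real.exp (-(δ * lnZ c σ x)))) with hK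
  have hKtop : K ≠ ⊤ := by
    have h1 : ∑' x : ℤ, ENNReal.ofReal (Real.exp (-(δ * lnZ c σ x))) ≠ ⊤ :=
      (one_site hσ hc hδ0).tsum_ofReal_ne_top
    have h2 := (ZT_finite hσ hc hδ0).ne
    exact ENNReal.mul_ne_top (by simp)
      (ENNReal.mul_ne_top (ENNReal.mul_ne_top ENNReal.ofReal_ne_top h2) h1)
  refine ⟨K.toReal + 1, by positivity, fun j => ?_⟩
  have hnn : ∀ t : {t : (ℤ →₀ ℕ) × (ℤ →₀ ℕ) × (ℤ →₀ ℕ) // 1 ≤ t.2.1 j},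
      0 ≤ vectorFieldTerm c σ ρ μ r j t.1 := by
    intro t; unfold vectorFieldTerm; positivity
  have hb : ∑' t : {t : (ℤ →₀ ℕ) × (ℤ →₀ ℕ) × (ℤ →₀ ℕ) // 1 ≤ t.2.1 j},
      ENNReal.ofReal (vectorFieldTerm c σ ρ μ r j t.1) ≤ K := by
    rw [hK, ← gg_sum c σ δ C hC0 j]
    apply tsum_le_of_exists _ _ (fun y => ⟨glue j y, glue_ge j y⟩)
    rintro ⟨⟨a, k, k'⟩, hk⟩
    obtain ⟨u, rfl⟩ := split_single k j (by dsimp only at hk; omega)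
    obtain ⟨y, hy1, hy2⟩ := main_exists hσ hc hρ hα hμ hsub hδ0 hδ1 hδ2 hC1 hC2 j a u k'
    exact ⟨y, Subtype.ext hy1, ENNReal.ofReal_le_ofReal hy2⟩
  have hne := ne_top_of_le_ne_top hKtop hb
  have hS : Summable (fun t : {t : (ℤ →₀ ℕ) × (ℤ →₀ ℕ) × (ℤ →₀ ℕ) // 1 ≤ t.2.1 j} =>
        vectorFieldTerm c σ ρ μ r j t.1) := by
    have := ENNReal.summable_toReal hne
    simpa only [ENNReal.toReal_ofReal (hnn _)] using this
  refine ⟨hS, ?_⟩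
  rw [← ENNReal.ofReal_tsum_of_nonneg hnn hS] at hb
  have := (ENNReal.ofReal_le_iff_le_toReal hKtop).1 hb
  linarith
end
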